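/- arXiv:2307.14546 — 15 statements merged into one kernel-verified Lean document; each statement's English description precedes it below -/
import Mathlib

section
/- For all complex numbers p, q, a, b and every natural number m, the integral ∫₀^{2π} exp((p + i·a)·cos x + (q + i·b)·sin x)·exp(−i·m·x) dx equals 2π·X^m·∑_{j=0}^∞ (X·Y)^j / (j!·(j+m)!), where X = ((p+b) + i·(a−q))/2 and Y = ((p−b) + i·(a+q))/2. -/
open scoped Real

/-!
Writing `A cos x + B sin x` as `X e^{ix} + Y e^{-ix}` factors the integrand into a power series in
`e^{ix}`, a power series in `e^{-ix}` and the character `e^{-imx}`. Expanding the product gives an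
absolutely convergent double series whose `(i, j)` term has frequency `i - j - m`. Integration over
a period kills every term except those with `i = j + m`.
-/

section TrigonometricSeries

open Complex

theorem integral_exp_int_mul_mul_I (n : ℤ) :
    ∫ x : ℝ in (0 : ℝ)..(2 * π), exp (n * x * I) = if n = 0 then 2 * (π : ℂ) else 0 := by
  split_ifs with hn
  · simp [hn]
  · have periodic : exp (n * I * (2 * π : ℝ)) = 1 := by
      rw [← exp_int_mul_two_pi_mul_I n]
      push_cast
      ring_nf
    simp_rw [mul_right_comm _ _ I]
    rw [integral_exp_mul_complex (by simp [hn]), periodic]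
    simp

theorem hasSum_integral_trigonometric_series {ι E : Type*} [Countable ι] [NormedAddCommGroup E]
    [NormedSpace ℂ E] [CompleteSpace E] {c : ι → E} {n : ι → ℤ} {f : ℝ → E}
    (hc : Summable fun k => ‖c k‖)
    (hf : ∀ x : ℝ, HasSum (fun k => exp (n k * x * I) • c k) (f x)) :
    HasSum (fun k => if n k = 0 then (2 * π : ℂ) • c k else 0)
      (∫ x in (0 : ℝ)..(2 * π), f x) := by
  have norm_term (k : ι) (x : ℝ) : ‖exp (n k * x * I) • c k‖ = ‖c k‖ := by
    simp [norm_smul, norm_exp]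
  have integral_term (k : ι) : ∫ x : ℝ in (0 : ℝ)..(2 * π), exp (n k * x * I) • c k =
      if n k = 0 then (2 * π : ℂ) • c k else 0 := by
    rw [intervalIntegral.integral_smul_const, integral_exp_int_mul_mul_I, ite_smul, zero_smul]
  simp_rw [← integral_term]
  refine intervalIntegral.hasSum_integral_of_dominated_convergence (fun k _ => ‖c k‖)
    (fun k => Continuous.aestronglyMeasurable (by fun_prop))
    (fun k => .of_forall fun x _ => (norm_term k x).le)
    (.of_forall fun _ _ => hc) (by simp) (.of_forall fun x _ => hf x)

theorem summable_norm_pow_smul_of_norm_le_one {𝕜 E : Type*} [NormedField 𝕜]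
    [SeminormedAddCommGroup E] [NormedSpace 𝕜 E] {c : ℕ → E} {z : 𝕜} (hz : ‖z‖ ≤ 1)
    (hc : Summable fun i => ‖c i‖) : Summable fun i => ‖z ^ i • c i‖ := by
  refine hc.of_nonneg_of_le (fun _ => norm_nonneg _) fun i => ?_
  rw [norm_smul, norm_pow]
  exact mul_le_of_le_one_left (norm_nonneg _) (pow_le_one₀ (norm_nonneg z) hz)

section HadamardProduct

variable {A : Type*} [NormedRing A] [NormedAlgebra ℂ A] [CompleteSpace A] {α β : ℕ → A}

theorem hasSum_exp_smul_tsum_mul_tsum (hα : Summable fun i => ‖α i‖) (hβ : Summable fun j => ‖β j‖)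
    (m : ℤ) (x : ℝ) :
    HasSum (fun k : ℕ × ℕ => exp (((k.1 - k.2 - m : ℤ) : ℂ) * x * I) • (α k.1 * β k.2))
      (exp (-m * x * I) • ((∑' i, exp (x * I) ^ i • α i) * ∑' j, exp (-x * I) ^ j • β j)) := by
  have hα' := summable_norm_pow_smul_of_norm_le_one (norm_exp_ofReal_mul_I x).le hα
  have hβ' := summable_norm_pow_smul_of_norm_le_one
    (by simpa using (norm_exp_ofReal_mul_I (-x)).le : ‖exp (-x * I)‖ ≤ 1) hβ
  rw [tsum_mul_tsum_of_summable_norm hα' hβ']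
  convert (summable_mul_of_summable_norm hα' hβ').hasSum.const_smul (exp (-m * x * I))
    using 2 with k
  rw [smul_mul_smul_comm, smul_smul, ← exp_nat_mul, ← exp_nat_mul, ← exp_add, ← exp_add]
  push_cast
  ring_nf

theorem hasSum_integral_exp_smul_tsum_mul_tsum (hα : Summable fun i => ‖α i‖)
    (hβ : Summable fun j => ‖β j‖) (m : ℕ) :
    HasSum (fun j => (2 * π : ℂ) • (α (j + m) * β j))
      (∫ x : ℝ in (0 : ℝ)..(2 * π), exp (-m * x * I) •
        ((∑' i, exp (x * I) ^ i • α i) * ∑' j, exp (-x * I) ^ j • β j)) := by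
  have double_sum := hasSum_integral_trigonometric_series (hα.mul_norm hβ)
    (hasSum_exp_smul_tsum_mul_tsum hα hβ m)
  have diagonal_injective : Function.Injective fun j : ℕ => (j + m, j) :=
    fun _ _ h => congrArg Prod.snd h
  rw [← diagonal_injective.hasSum_iff] at double_sum
  · simpa [Function.comp_def] using double_sum
  · rintro ⟨i, j⟩ off_diagonal
    refine if_neg fun frequency_zero => off_diagonal ⟨j, ?_⟩
    ext <;> grind

end HadamardProduct

theorem hasSum_integral_exp_add_exp_neg (X Y : ℂ) (m : ℕ) :
    HasSum (fun j : ℕ => 2 * (π : ℂ) * X ^ m *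
        ((X * Y) ^ j / ((j.factorial : ℂ) * ((j + m).factorial : ℂ))))
      (∫ x : ℝ in (0 : ℝ)..(2 * π),
        exp (X * exp (x * I) + Y * exp (-x * I)) * exp (-m * x * I)) := by
  have exp_mul_eq_tsum (w z : ℂ) :
      exp (w * z) = ∑' i : ℕ, z ^ i • (w ^ i / (i.factorial : ℂ)) := by
    simp_rw [exp_eq_exp_ℂ, NormedSpace.exp_eq_tsum_div, mul_pow, smul_eq_mul, mul_comm (w ^ _),
      mul_div_assoc]
  have series := hasSum_integral_exp_smul_tsum_mul_tsum (NormedSpace.norm_expSeries_div_summable X)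
    (NormedSpace.norm_expSeries_div_summable Y) m
  simp_rw [← exp_mul_eq_tsum, ← exp_add, smul_eq_mul, mul_comm (exp (-m * _ * I))] at series
  have coefficient (j : ℕ) : 2 * (π : ℂ) * (X ^ (j + m) / ((j + m).factorial : ℂ) *
      (Y ^ j / (j.factorial : ℂ))) =
      2 * (π : ℂ) * X ^ m * ((X * Y) ^ j / ((j.factorial : ℂ) * ((j + m).factorial : ℂ))) := by
    rw [pow_add, mul_pow]
    field_simp
  simpa only [coefficient] using series

theorem mul_cos_add_mul_sin_eq_exp (A B z : ℂ) :
    A * cos z + B * sin z = (A - I * B) / 2 * exp (z * I) + (A + I * B) / 2 * exp (-z * I) := by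
  rw [cos, sin]
  ring

end TrigonometricSeries

theorem grobner_hofreiter_contour_integral (p q a b : ℂ) (m : ℕ) :
    (∫ x : ℝ in (0:ℝ)..(2 * π),
        Complex.exp ((p + Complex.I * a) * Complex.cos x + (q + Complex.I * b) * Complex.sin x) *
          Complex.exp (-Complex.I * m * x)) =
      2 * (π : ℂ) * (((p + b) + Complex.I * (a - q)) / 2) ^ m *
        ∑' j : ℕ,
          ((((p + b) + Complex.I * (a - q)) / 2) * (((p - b) + Complex.I * (a + q)) / 2)) ^ j /
            ((j.factorial : ℂ) * ((j + m).factorial : ℂ)) := by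
  have coeff_pos : (p + Complex.I * a) - Complex.I * (q + Complex.I * b) =
      (p + b) + Complex.I * (a - q) := by
    linear_combination -b * Complex.I_sq
  have coeff_neg : (p + Complex.I * a) + Complex.I * (q + Complex.I * b) =
      (p - b) + Complex.I * (a + q) := by
    linear_combination b * Complex.I_sq
  have character (x : ℝ) : -Complex.I * m * x = -m * x * Complex.I := by ring
  simp_rw [mul_cos_add_mul_sin_eq_exp, coeff_pos, coeff_neg, character]
  rw [← tsum_mul_left, (hasSum_integral_exp_add_exp_neg _ _ m).tsum_eq]
end

section
/- For all real numbers p, q, a, b and every natural number m, ∫₀^{2π} exp(p·cos x + q·sin x)·sin(a·cos x + b·sin x − m·x) dx = i·π·[ (A′ − i·B′)^m · S_m(C′ − i·D′) − (A′ + i·B′)^m · S_m(C′ + i·D′) ], where A′ = (p+b)/2, B′ = (a−q)/2, C′ = (p² + q² − a² − b²)/4, D′ = (a·p + b·q)/2, and S_m(z) = ∑_{k=0}^∞ z^k/(k!·(m+k)!). (In the degenerate case A′ = B′ = 0 and m = 0, the term (A′ ± i·B′)^m is the natural power 0^0 = 1.) -/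
open scoped Real

/-- `S m z = ∑_{k=0}^∞ z^k / (k! (m+k)!)`, i.e. `₀F₁(; m+1; z) / m!`. -/
noncomputable def S (m : ℕ) (z : ℂ) : ℂ :=
  ∑' k : ℕ, z ^ k / ((k.factorial : ℂ) * ((m + k).factorial : ℂ))

/-!
Put `z = exp (x * I)`. Writing the sine as a difference of two exponentials, the integrand becomes
a combination of `exp (P * cos x + Q * sin x ∓ m * x * I)` with `P = p ± a * I`, `Q = q ± b * I`,
and `P * cos x + Q * sin x = u * z + v / z` for `u = (P - Q * I) / 2` and `v = (P + Q * I) / 2`.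
Each integral is therefore a Laurent coefficient of `exp (u * z + v / z)`. Expanding `exp (v / z)`
under the integral sign and applying Cauchy's formula to `exp (u * z)` termwise evaluates the
coefficient of `z ^ m` as `u ^ m * S m (u * v)`, where `u * v = (P ^ 2 + Q ^ 2) / 4`; the
coefficient of `z ^ (-m)` follows by the reflection `x ↦ 2 * π - x`, which exchanges `u` and `v`.
-/

section

open Complex Metric MeasureTheory

theorem hasSum_circleIntegral_pow_div_factorial_smul {E : Type*} [NormedAddCommGroup E]
    [NormedSpace ℂ E] {f : ℂ → ℂ} {g : ℂ → E} {c : ℂ} {R : ℝ}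
    (hf : ContinuousOn f (sphere c |R|)) (hg : CircleIntegrable g c R) :
    HasSum (fun k : ℕ ↦ ∮ z in C(c, R), (f z ^ k / k.factorial) • g z)
      (∮ z in C(c, R), exp (f z) • g z) := by
  obtain ⟨M, hM⟩ := (isCompact_sphere c |R|).exists_bound_of_continuousOn hf
  have hfM (θ : ℝ) : ‖f (circleMap c R θ)‖ ≤ M := hM _ (circleMap_mem_sphere' c R θ)
  have hf' : Continuous fun θ ↦ f (circleMap c R θ) :=
    hf.comp_continuous (continuous_circleMap c R) (circleMap_mem_sphere' c R)
  have hg' : IntervalIntegrable (fun θ ↦ deriv (circleMap c R) θ • g (circleMap c R θ))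
      volume 0 (2 * π) := hg.out
  refine intervalIntegral.hasSum_integral_of_dominated_convergence
    (fun k θ ↦ M ^ k / k.factorial * ‖deriv (circleMap c R) θ • g (circleMap c R θ)‖)
    (fun k ↦ ?_) (fun k ↦ .of_forall fun θ _ ↦ ?_) (.of_forall fun θ _ ↦ ?_) ?_
    (.of_forall fun θ _ ↦ ?_)
  · simp only [smul_comm (deriv (circleMap c R) _)]
    exact ((hf'.pow k).div_const _).aestronglyMeasurable.smul hg'.def'.aestronglyMeasurable
  · rw [smul_comm, norm_smul, norm_div, norm_pow, norm_natCast]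
    gcongr
    exact hfM θ
  · exact (Real.summable_pow_div_factorial M).mul_right _
  · simp only [tsum_mul_right]
    exact hg'.norm.const_mul _
  · rw [exp_eq_exp_ℂ]
    exact ((NormedSpace.expSeries_div_hasSum_exp _).smul_const _).const_smul _

theorem circleIntegral_exp_mul_div_pow (u : ℂ) {R : ℝ} (hR : 0 < R) (n : ℕ) :
    (∮ z in C(0, R), exp (u * z) / z ^ (n + 1)) = 2 * π * I * (u ^ n / n.factorial) := by
  have hexp : DifferentiableOn ℂ (fun z ↦ exp (u * z)) (closedBall 0 R) := by fun_prop
  have hcauchy := hexp.circleIntegral_one_div_sub_center_pow_smul hR n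
  simp only [sub_zero, smul_eq_mul, one_div_mul_eq_div, iteratedDeriv_cexp_const_mul, mul_zero,
    exp_zero, mul_one] at hcauchy
  rw [hcauchy]
  ring

theorem circleIntegral_exp_mul_add_div_div_pow (u v : ℂ) {R : ℝ} (hR : 0 < R) (m : ℕ) :
    (∮ z in C(0, R), exp (u * z + v / z) / z ^ (m + 1)) =
      2 * π * I * (u ^ m * S m (u * v)) := by
  have hz {z : ℂ} (h : z ∈ sphere 0 |R|) : z ≠ 0 :=
    ne_of_mem_sphere h (abs_pos.2 hR.ne').ne'
  have hterm (k : ℕ) :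
      (∮ z in C(0, R), ((v / z) ^ k / k.factorial) • (exp (u * z) / z ^ (m + 1))) =
        2 * π * I * (u ^ m * ((u * v) ^ k / (k.factorial * (m + k).factorial))) := calc
    _ = ∮ z in C(0, R), v ^ k / k.factorial * (exp (u * z) / z ^ (m + k + 1)) := by
      congr! 2 with z
      rw [smul_eq_mul]
      ring
    _ = v ^ k / k.factorial * (2 * π * I * (u ^ (m + k) / (m + k).factorial)) := by
      rw [circleIntegral.integral_const_mul, circleIntegral_exp_mul_div_pow u hR]
    _ = _ := by ring
  have hsum := hasSum_circleIntegral_pow_div_factorial_smul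
    (f := fun z ↦ v / z) (g := fun z ↦ exp (u * z) / z ^ (m + 1)) (c := 0) (R := R)
    (continuousOn_const.div continuousOn_id fun _ ↦ hz)
    (ContinuousOn.circleIntegrable' <|
      (by fun_prop : Continuous fun z ↦ exp (u * z)).continuousOn.div
        (by fun_prop) fun _ h ↦ pow_ne_zero _ (hz h))
  calc
    _ = ∮ z in C(0, R), exp (v / z) • (exp (u * z) / z ^ (m + 1)) := by
      congr! 2 with z
      rw [smul_eq_mul, exp_add]
      ring
    _ = _ := by rw [← hsum.tsum_eq, S, ← tsum_mul_left, ← tsum_mul_left, tsum_congr hterm]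

theorem integral_exp_cos_add_sin_sub (P Q : ℂ) (m : ℕ) :
    (∫ x : ℝ in 0..2 * π, exp (P * cos x + Q * sin x - m * x * I)) =
      2 * π * (((P - Q * I) / 2) ^ m * S m ((P ^ 2 + Q ^ 2) / 4)) := by
  have huv : (P - Q * I) / 2 * ((P + Q * I) / 2) = (P ^ 2 + Q ^ 2) / 4 := by
    linear_combination (-Q ^ 2 / 4) * I_sq
  have hcircle := circleIntegral_exp_mul_add_div_div_pow ((P - Q * I) / 2) ((P + Q * I) / 2)
    one_pos m
  have hpoint (x : ℝ) : exp (P * cos x + Q * sin x - m * x * I) =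
      exp ((P - Q * I) / 2 * exp (x * I) + (P + Q * I) / 2 / exp (x * I)) / exp (x * I) ^ m := by
    rw [← exp_nat_mul, ← exp_sub, div_eq_mul_inv _ (exp (x * I)), ← exp_neg, ← neg_mul,
      exp_mul_I, exp_mul_I, cos_neg, sin_neg]
    congr 1
    linear_combination (Q * sin x) * I_sq
  refine mul_left_cancel₀ I_ne_zero ?_
  rw [← intervalIntegral.integral_const_mul]
  calc
    _ = ∮ z in C(0, 1), exp ((P - Q * I) / 2 * z + (P + Q * I) / 2 / z) / z ^ (m + 1) := by
      rw [circleIntegral]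
      congr! 2
      rw [hpoint, deriv_circleMap, circleMap_zero, ofReal_one, one_mul, smul_eq_mul, pow_succ]
      field_simp
    _ = _ := by
      rw [hcircle, huv]
      ring

theorem integral_exp_cos_add_sin_add (P Q : ℂ) (m : ℕ) :
    (∫ x : ℝ in 0..2 * π, exp (P * cos x + Q * sin x + m * x * I)) =
      2 * π * (((P + Q * I) / 2) ^ m * S m ((P ^ 2 + Q ^ 2) / 4)) := by
  have hreflect (x : ℝ) :
      exp (P * cos (2 * π - x : ℝ) + Q * sin (2 * π - x : ℝ) + m * (2 * π - x : ℝ) * I) =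
        exp (P * cos x + -Q * sin x - m * x * I) := by
    push_cast
    rw [cos_two_pi_sub, sin_two_pi_sub, exp_eq_exp_iff_exists_int]
    exact ⟨m, by push_cast; ring⟩
  calc
    _ = ∫ x : ℝ in 0..2 * π, exp (P * cos x + -Q * sin x - m * x * I) := by
      simp only [← hreflect]
      rw [intervalIntegral.integral_comp_sub_left
        (fun x : ℝ ↦ exp (P * cos x + Q * sin x + m * x * I)), sub_self, sub_zero]
    _ = _ := by rw [integral_exp_cos_add_sin_sub, neg_sq, neg_mul, sub_neg_eq_add]

theorem exp_mul_sin (w z : ℂ) :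
    exp w * sin z = I / 2 * (exp (w - z * I) - exp (w + z * I)) := by
  rw [sin, sub_eq_add_neg w, ← neg_mul, exp_add, exp_add]
  ring

theorem gr_3937_1_corrected_general (p q a b : ℂ) (m : ℕ) :
    (∫ x : ℝ in 0..2 * π,
        exp (p * cos x + q * sin x) * sin (a * cos x + b * sin x - m * x)) =
      I * π *
        (((p + b) / 2 - I * ((a - q) / 2)) ^ m *
            S m ((p ^ 2 + q ^ 2 - a ^ 2 - b ^ 2) / 4 - I * ((a * p + b * q) / 2)) -
          ((p + b) / 2 + I * ((a - q) / 2)) ^ m *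
            S m ((p ^ 2 + q ^ 2 - a ^ 2 - b ^ 2) / 4 + I * ((a * p + b * q) / 2))) := by
  have hpoint (x : ℝ) : exp (p * cos x + q * sin x) * sin (a * cos x + b * sin x - m * x) =
      I / 2 * (exp ((p - a * I) * cos x + (q - b * I) * sin x + m * x * I) -
        exp ((p + a * I) * cos x + (q + b * I) * sin x - m * x * I)) := by
    rw [exp_mul_sin]
    congr! 3 <;> ring
  simp only [hpoint]
  rw [intervalIntegral.integral_const_mul,
    intervalIntegral.integral_sub (Continuous.intervalIntegrable (by fun_prop) _ _)
      (Continuous.intervalIntegrable (by fun_prop) _ _),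
    integral_exp_cos_add_sin_add, integral_exp_cos_add_sin_sub]
  have hbase_add : (p - a * I + (q - b * I) * I) / 2 = (p + b) / 2 - I * ((a - q) / 2) := by
    linear_combination (-b / 2) * I_sq
  have hbase_sub : (p + a * I - (q + b * I) * I) / 2 = (p + b) / 2 + I * ((a - q) / 2) := by
    linear_combination (-b / 2) * I_sq
  have harg_add : ((p - a * I) ^ 2 + (q - b * I) ^ 2) / 4 =
      (p ^ 2 + q ^ 2 - a ^ 2 - b ^ 2) / 4 - I * ((a * p + b * q) / 2) := by
    linear_combination ((a ^ 2 + b ^ 2) / 4) * I_sq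
  have harg_sub : ((p + a * I) ^ 2 + (q + b * I) ^ 2) / 4 =
      (p ^ 2 + q ^ 2 - a ^ 2 - b ^ 2) / 4 + I * ((a * p + b * q) / 2) := by
    linear_combination ((a ^ 2 + b ^ 2) / 4) * I_sq
  rw [hbase_add, hbase_sub, harg_add, harg_sub]
  ring

end

theorem gr_3937_1_corrected (p q a b : ℝ) (m : ℕ) :
    ((∫ x : ℝ in (0:ℝ)..(2 * π),
        Real.exp (p * Real.cos x + q * Real.sin x) *
          Real.sin (a * Real.cos x + b * Real.sin x - m * x)) : ℂ) =
      Complex.I * (π : ℂ) *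
        ((((p + b) / 2 : ℂ) - Complex.I * ((a - q) / 2 : ℂ)) ^ m *
            S m (((p^2 + q^2 - a^2 - b^2) / 4 : ℂ) - Complex.I * ((a * p + b * q) / 2 : ℂ)) -
          (((p + b) / 2 : ℂ) + Complex.I * ((a - q) / 2 : ℂ)) ^ m *
            S m (((p^2 + q^2 - a^2 - b^2) / 4 : ℂ) + Complex.I * ((a * p + b * q) / 2 : ℂ))) := by
  push_cast
  exact gr_3937_1_corrected_general p q a b m
end

section
/- For all complex numbers p, q, a, b (with real parts p_R, q_R, a_R, b_R and imaginary parts p_I, q_I, a_I, b_I) and every natural number m, ∫₀^{2π} exp(p·cos x + q·sin x)·sin(a·cos x + b·sin x − m·x) dx = i·π·[ (A₁ + i·B₁)^m · S_m(C₁ + i·D₁) − (A₂ + i·B₂)^m · S_m(C₂ + i·D₂) ], where A₁ = (p_R + a_I − q_I + b_R)/2, A₂ = (p_R − a_I + q_I + b_R)/2, B₁ = (p_I − a_R + q_R + b_I)/2, B₂ = (p_I + a_R − q_R + b_I)/2, C₁ = ((p_R+a_I)² + (q_R+b_I)² − (p_I−a_R)² − (q_I−b_R)²)/4, C₂ = ((p_R−a_I)²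 + (q_R−b_I)² − (p_I+a_R)² − (q_I+b_R)²)/4, D₁ = ((p_I−a_R)(p_R+a_I) + (q_I−b_R)(q_R+b_I))/2, and D₂ = ((p_I+a_R)(p_R−a_I) + (q_I+b_R)(q_R−b_I))/2. -/
open scoped Real

/-!
Writing the sine through exponentials turns the integral into two integrals of
`exp (P cos x + Q sin x ± i m x)`. With `u = (P - i Q) / 2` and `v = (P + i Q) / 2` one has
`P cos x + Q sin x = u e^{ix} + v e^{-ix}`, so expanding both exponential factors and integrating
over a period keeps the terms `u ^ k v ^ (m + k) / (k! (m + k)!)` only, and they sum to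
`v ^ m S_m (u v)` where `u v = (P ^ 2 + Q ^ 2) / 4`.
-/

section

open Complex MeasureTheory Set
open scoped Nat Interval

theorem hasSum_intervalIntegral_exp_smul {E : Type*} [NormedAddCommGroup E] [NormedSpace ℂ E]
    {μ : Measure ℝ} {a b : ℝ} {f : ℝ → ℂ} {g : ℝ → E}
    (hf : ContinuousOn f [[a, b]]) (hg : IntervalIntegrable g μ a b) :
    HasSum (fun k : ℕ ↦ ∫ x in a..b, (f x ^ k / k !) • g x ∂μ)
      (∫ x in a..b, exp (f x) • g x ∂μ) := by
  obtain ⟨C, hC⟩ := isCompact_uIcc.exists_bound_of_continuousOn hf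
  have hf_meas : AEStronglyMeasurable f (μ.restrict (Ι a b)) :=
    (hf.mono uIoc_subset_uIcc).aestronglyMeasurable measurableSet_uIoc
  refine intervalIntegral.hasSum_integral_of_dominated_convergence
    (fun k x ↦ C ^ k / k ! * ‖g x‖) (fun k ↦ ?_) (fun k ↦ ?_) ?_ ?_ ?_
  · simp only [div_eq_mul_inv]
    exact ((hf_meas.pow k).mul_const _).smul hg.def'.aestronglyMeasurable
  · refine .of_forall fun x hx ↦ ?_
    rw [norm_smul, norm_div, norm_pow, norm_natCast]
    gcongr
    exact hC x (uIoc_subset_uIcc hx)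
  · exact .of_forall fun x _ ↦ (Real.summable_pow_div_factorial C).mul_right _
  · simp only [tsum_mul_right]
    exact hg.norm.const_mul _
  · refine .of_forall fun x _ ↦ HasSum.smul_const ?_ (g x)
    rw [exp_eq_exp_ℂ]
    exact NormedSpace.expSeries_div_hasSum_exp (f x)

theorem integral_exp_int_mul_I (n : ℤ) :
    ∫ x : ℝ in 0..2 * π, exp (n * x * I) = if n = 0 then 2 * (π : ℂ) else 0 := by
  split_ifs with hn
  · simp [hn]
  · have hc : (n * I : ℂ) ≠ 0 := by simp [hn]
    have hperiod : exp (n * I * (2 * π : ℝ)) = 1 :=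
      exp_eq_one_iff.mpr ⟨n, by push_cast; ring⟩
    simp only [mul_right_comm _ _ I]
    rw [integral_exp_mul_complex hc, hperiod]
    simp

theorem integral_exp_mul_exp_neg_mul_exp_nat (v : ℂ) (n : ℕ) :
    ∫ x : ℝ in 0..2 * π, exp (v * exp (-x * I)) * exp (n * x * I) =
      2 * π * (v ^ n / n !) := by
  have hterm (k : ℕ) :
      ∫ x : ℝ in 0..2 * π, ((v * exp (-x * I)) ^ k / k !) * exp (n * x * I) =
        if k = n then 2 * π * (v ^ n / n !) else 0 := by
    calc
      _ = ∫ x : ℝ in 0..2 * π, v ^ k / k ! * exp ((n - k : ℤ) * x * I) := by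
        congr! 2 with x
        rw [mul_pow, ← exp_nat_mul, mul_div_right_comm, mul_assoc, ← exp_add]
        push_cast
        ring_nf
      _ = _ := by
        rw [intervalIntegral.integral_const_mul, integral_exp_int_mul_I]
        split_ifs <;> grind
  have hsum := hasSum_intervalIntegral_exp_smul (μ := volume) (a := 0) (b := 2 * π)
    (f := fun x ↦ v * exp (-x * I)) (g := fun x ↦ exp (n * x * I))
    (by fun_prop) (Continuous.intervalIntegrable (by fun_prop) _ _)
  simp only [smul_eq_mul, hterm] at hsum
  exact hsum.unique (hasSum_ite_eq n _)

theorem integral_exp_add_exp_neg_mul_exp_nat (u v : ℂ) (m : ℕ) :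
    ∫ x : ℝ in 0..2 * π, exp (u * exp (x * I) + v * exp (-x * I)) * exp (m * x * I) =
      2 * π * (v ^ m * S m (u * v)) := by
  have hterm (k : ℕ) :
      ∫ x : ℝ in 0..2 * π, ((u * exp (x * I)) ^ k / k !) *
          (exp (v * exp (-x * I)) * exp (m * x * I)) =
        2 * π * (v ^ m * ((u * v) ^ k / (k ! * (m + k)!))) := by
    calc
      _ = ∫ x : ℝ in 0..2 * π,
          u ^ k / k ! * (exp (v * exp (-x * I)) * exp ((m + k : ℕ) * x * I)) := by
        congr! 2 with x
        rw [mul_pow, ← exp_nat_mul, mul_div_right_comm, mul_assoc, mul_left_comm (exp _),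
          ← exp_add]
        push_cast
        ring_nf
      _ = _ := by
        rw [intervalIntegral.integral_const_mul, integral_exp_mul_exp_neg_mul_exp_nat]
        ring
  have hsum := hasSum_intervalIntegral_exp_smul (μ := volume) (a := 0) (b := 2 * π)
    (f := fun x ↦ u * exp (x * I)) (g := fun x ↦ exp (v * exp (-x * I)) * exp (m * x * I))
    (by fun_prop) (Continuous.intervalIntegrable (by fun_prop) _ _)
  simp only [smul_eq_mul, hterm] at hsum
  simp only [exp_add, mul_assoc (exp (u * _))]
  rw [← hsum.tsum_eq, tsum_mul_left, tsum_mul_left, S]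

theorem integral_exp_cos_add_sin_add_nat_mul_I (P Q : ℂ) (m : ℕ) :
    ∫ x : ℝ in 0..2 * π, exp (P * cos x + Q * sin x + m * x * I) =
      2 * π * (((P + Q * I) / 2) ^ m * S m ((P ^ 2 + Q ^ 2) / 4)) := by
  have huv : (P - Q * I) / 2 * ((P + Q * I) / 2) = (P ^ 2 + Q ^ 2) / 4 := by
    linear_combination (-Q ^ 2 / 4) * I_sq
  rw [← huv, ← integral_exp_add_exp_neg_mul_exp_nat]
  congr! 2 with x
  rw [← exp_add, cos, sin]
  ring_nf

theorem integral_exp_cos_add_sin_sub_nat_mul_I (P Q : ℂ) (m : ℕ) :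
    ∫ x : ℝ in 0..2 * π, exp (P * cos x + Q * sin x - m * x * I) =
      2 * π * (((P - Q * I) / 2) ^ m * S m ((P ^ 2 + Q ^ 2) / 4)) := by
  set f : ℝ → ℂ := fun x ↦ exp (P * cos x + Q * sin x - m * x * I)
  have hreflect (x : ℝ) : f (2 * π - x) = exp (P * cos x + -Q * sin x + m * x * I) := by
    simp only [f]
    push_cast
    rw [cos_two_pi_sub, sin_two_pi_sub, exp_eq_exp_iff_exists_int]
    exact ⟨-m, by push_cast; ring⟩
  calc
    ∫ x in 0..2 * π, f x = ∫ x in 0..2 * π, f (2 * π - x) := by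
      simp [intervalIntegral.integral_comp_sub_left]
    _ = _ := by
      simp only [hreflect]
      rw [integral_exp_cos_add_sin_add_nat_mul_I, neg_sq, neg_mul, ← sub_eq_add_neg]

theorem exp_mul_sin_eq (z w : ℂ) :
    exp z * sin w = I / 2 * (exp (z - w * I) - exp (z + w * I)) := by
  rw [sin, sub_eq_add_neg z, exp_add, exp_add, neg_mul]
  ring

theorem integral_exp_cos_add_sin_mul_sin (p q a b : ℂ) (m : ℕ) :
    ∫ x : ℝ in 0..2 * π, exp (p * cos x + q * sin x) * sin (a * cos x + b * sin x - m * x) =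
      I * π *
        (((p - a * I + (q - b * I) * I) / 2) ^ m *
            S m (((p - a * I) ^ 2 + (q - b * I) ^ 2) / 4) -
          ((p + a * I - (q + b * I) * I) / 2) ^ m *
            S m (((p + a * I) ^ 2 + (q + b * I) ^ 2) / 4)) := by
  have hsplit (x : ℝ) :
      exp (p * cos x + q * sin x) * sin (a * cos x + b * sin x - m * x) =
        I / 2 * (exp ((p - a * I) * cos x + (q - b * I) * sin x + m * x * I) -
          exp ((p + a * I) * cos x + (q + b * I) * sin x - m * x * I)) := by
    rw [exp_mul_sin_eq]
    ring_nf
  simp only [hsplit]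
  rw [intervalIntegral.integral_const_mul,
    intervalIntegral.integral_sub (Continuous.intervalIntegrable (by fun_prop) _ _)
      (Continuous.intervalIntegrable (by fun_prop) _ _),
    integral_exp_cos_add_sin_add_nat_mul_I, integral_exp_cos_add_sin_sub_nat_mul_I]
  ring

theorem half_add_mul_I_eq_re_add_im (P Q : ℂ) :
    (P + Q * I) / 2 = (P.re - Q.im : ℝ) / 2 + I * ((P.im + Q.re : ℝ) / 2) := by
  conv_lhs => rw [← re_add_im P, ← re_add_im Q]
  push_cast
  linear_combination (Q.im / 2) * I_sq

theorem half_sub_mul_I_eq_re_add_im (P Q : ℂ) :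
    (P - Q * I) / 2 = (P.re + Q.im : ℝ) / 2 + I * ((P.im - Q.re : ℝ) / 2) := by
  conv_lhs => rw [← re_add_im P, ← re_add_im Q]
  push_cast
  linear_combination (-Q.im / 2) * I_sq

theorem quarter_sq_add_sq_eq_re_add_im (P Q : ℂ) :
    (P ^ 2 + Q ^ 2) / 4 =
      (P.re ^ 2 + Q.re ^ 2 - P.im ^ 2 - Q.im ^ 2 : ℝ) / 4 +
        I * ((P.im * P.re + Q.im * Q.re : ℝ) / 2) := by
  conv_lhs => rw [← re_add_im P, ← re_add_im Q]
  push_cast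
  linear_combination ((P.im ^ 2 + Q.im ^ 2) / 4) * I_sq

end

theorem gr_3937_1_complex_params (p q a b : ℂ) (m : ℕ) :
    (∫ x : ℝ in (0:ℝ)..(2 * π),
        Complex.exp (p * Complex.cos x + q * Complex.sin x) *
          Complex.sin (a * Complex.cos x + b * Complex.sin x - m * x)) =
      Complex.I * (π : ℂ) *
        ((((p.re + a.im - q.im + b.re) / 2 : ℂ) +
              Complex.I * ((p.im - a.re + q.re + b.im) / 2 : ℂ)) ^ m *
            S m ((((p.re + a.im)^2 + (q.re + b.im)^2 - (p.im - a.re)^2 - (q.im - b.re)^2) / 4 : ℂ) +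
              Complex.I * (((p.im - a.re) * (p.re + a.im) + (q.im - b.re) * (q.re + b.im)) / 2 : ℂ)) -
          (((p.re - a.im + q.im + b.re) / 2 : ℂ) +
              Complex.I * ((p.im + a.re - q.re + b.im) / 2 : ℂ)) ^ m *
            S m ((((p.re - a.im)^2 + (q.re - b.im)^2 - (p.im + a.re)^2 - (q.im + b.re)^2) / 4 : ℂ) +
              Complex.I * (((p.im + a.re) * (p.re - a.im) + (q.im + b.re) * (q.re - b.im)) / 2 : ℂ))) := by
  rw [integral_exp_cos_add_sin_mul_sin, half_add_mul_I_eq_re_add_im, half_sub_mul_I_eq_re_add_im,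
    quarter_sq_add_sq_eq_re_add_im, quarter_sq_add_sq_eq_re_add_im]
  simp only [Complex.add_re, Complex.add_im, Complex.sub_re, Complex.sub_im, Complex.mul_I_re,
    Complex.mul_I_im]
  push_cast
  congr 5 <;> ring
end

section
/- Let z and w be nonzero complex numbers and let m be an odd natural number. If arg z + arg w lies in the interval (−π, π], then z^{m/2} · w^{m/2} = (z·w)^{m/2}; otherwise (i.e., if arg z + arg w > π or arg z + arg w ≤ −π), then z^{m/2} · w^{m/2} = −(z·w)^{m/2}. Here all powers are principal complex powers with exponent m/2. -/
open scoped Real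

/-!
Since `exp (log z + log w) = z * w`, the sum `log z + log w` exceeds `log (z * w)` by `k * (2πi)`,
where `k` is the number of full turns by which `arg z + arg w` misses `(-π, π]`. Hence
`z ^ s * w ^ s` and `(z * w) ^ s` differ by the factor `exp (2πis) ^ k`. As `arg z + arg w` lies in
`(-2π, 2π]`, the integer `k` is `0` or `±1`, and `exp (2πis) = -1` when `s` is half an odd integer.
-/

section ToIocDiv

variable {α : Type*} [AddCommGroup α] [LinearOrder α] [IsOrderedAddMonoid α] [Archimedean α]
  {p a b : α} (hp : 0 < p)

theorem toIocDiv_eq_zero_of_mem_Ioc (hb : b ∈ Set.Ioc a (a + p)) : toIocDiv hp a b = 0 :=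
  toIocDiv_eq_of_sub_zsmul_mem_Ioc hp (by simpa only [zero_zsmul, sub_zero] using hb)

theorem toIocDiv_eq_one_of_mem_Ioc (hb : b ∈ Set.Ioc (a + p) (a + p + p)) :
    toIocDiv hp a b = 1 :=
  toIocDiv_eq_of_sub_zsmul_mem_Ioc hp <| by
    rw [one_zsmul]
    exact ⟨lt_sub_iff_add_lt.mpr hb.1, sub_le_iff_le_add.mpr hb.2⟩

theorem toIocDiv_eq_neg_one_of_mem_Ioc (hb : b ∈ Set.Ioc (a - p) a) : toIocDiv hp a b = -1 :=
  toIocDiv_eq_of_sub_zsmul_mem_Ioc hp <| by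
    rw [neg_one_zsmul, sub_neg_eq_add]
    exact ⟨sub_lt_iff_lt_add.mp hb.1, add_le_add_left hb.2 p⟩

theorem odd_toIocDiv_of_mem_Ioc_of_notMem_Ioc (hb : b ∈ Set.Ioc (a - p) (a + p + p))
    (hb' : b ∉ Set.Ioc a (a + p)) : Odd (toIocDiv hp a b) := by
  rcases le_or_gt b a with hba | hab
  · rw [toIocDiv_eq_neg_one_of_mem_Ioc hp ⟨hb.1, hba⟩]
    exact odd_neg_one
  · have hpb : a + p < b := lt_of_not_ge fun h ↦ hb' ⟨hab, h⟩
    rw [toIocDiv_eq_one_of_mem_Ioc hp ⟨hpb, hb.2⟩]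
    exact odd_one

end ToIocDiv

section PrincipalPowers

open Complex

variable {z w : ℂ}

theorem log_mul_eq_add_sub_toIocDiv (hz : z ≠ 0) (hw : w ≠ 0) :
    log (z * w) =
      log z + log w - toIocDiv Real.two_pi_pos (-π) (z.arg + w.arg) * (2 * π * I) := by
  simpa only [exp_add, exp_log hz, exp_log hw, add_im, log_im] using
    log_exp_eq_sub_toIocDiv (log z + log w)

theorem cpow_mul_cpow_eq_exp_zpow_mul (hz : z ≠ 0) (hw : w ≠ 0) (s : ℂ) :
    z ^ s * w ^ s =
      exp (2 * π * I * s) ^ toIocDiv Real.two_pi_pos (-π) (z.arg + w.arg) * (z * w) ^ s := by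
  rw [cpow_def_of_ne_zero hz, cpow_def_of_ne_zero hw, cpow_def_of_ne_zero (mul_ne_zero hz hw),
    log_mul_eq_add_sub_toIocDiv hz hw, ← exp_int_mul, ← exp_add, ← exp_add]
  ring_nf

theorem cpow_mul_cpow_of_arg_add_mem_Ioc (hz : z ≠ 0) (hw : w ≠ 0)
    (h : z.arg + w.arg ∈ Set.Ioc (-π) π) (s : ℂ) : z ^ s * w ^ s = (z * w) ^ s := by
  have turns_eq_zero : toIocDiv Real.two_pi_pos (-π) (z.arg + w.arg) = 0 :=
    toIocDiv_eq_zero_of_mem_Ioc _ (by rwa [show -π + 2 * π = π by ring])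
  rw [cpow_mul_cpow_eq_exp_zpow_mul hz hw, turns_eq_zero, zpow_zero, one_mul]

theorem odd_toIocDiv_arg_add_arg (h : z.arg + w.arg ∉ Set.Ioc (-π) π) :
    Odd (toIocDiv Real.two_pi_pos (-π) (z.arg + w.arg)) := by
  apply odd_toIocDiv_of_mem_Ioc_of_notMem_Ioc
  · obtain ⟨hz_lower, hz_upper⟩ := z.arg_mem_Ioc
    obtain ⟨hw_lower, hw_upper⟩ := w.arg_mem_Ioc
    constructor <;> linarith [Real.pi_pos]
  · rwa [show -π + 2 * π = π by ring]

theorem exp_two_pi_mul_I_mul_half_odd {m : ℤ} (hm : Odd m) :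
    exp (2 * π * I * ((m : ℂ) / 2)) = -1 := by
  rw [show 2 * π * I * ((m : ℂ) / 2) = m * (π * I) by ring, exp_int_mul, exp_pi_mul_I,
    hm.neg_one_zpow]

end PrincipalPowers

theorem cpow_half_odd_mul_sign_general (z w : ℂ) (hz : z ≠ 0) (hw : w ≠ 0) (m : ℤ) (hm : Odd m) :
    (z.arg + w.arg ∈ Set.Ioc (-π) π →
        z ^ ((m : ℂ) / 2) * w ^ ((m : ℂ) / 2) = (z * w) ^ ((m : ℂ) / 2)) ∧
      (z.arg + w.arg ∉ Set.Ioc (-π) π →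
        z ^ ((m : ℂ) / 2) * w ^ ((m : ℂ) / 2) = -((z * w) ^ ((m : ℂ) / 2))) := by
  refine ⟨fun h ↦ cpow_mul_cpow_of_arg_add_mem_Ioc hz hw h _, fun h ↦ ?_⟩
  rw [cpow_mul_cpow_eq_exp_zpow_mul hz hw, exp_two_pi_mul_I_mul_half_odd hm,
    (odd_toIocDiv_arg_add_arg h).neg_one_zpow, neg_one_mul]

theorem cpow_half_odd_mul_sign (z w : ℂ) (hz : z ≠ 0) (hw : w ≠ 0) (m : ℕ) (hm : Odd m) :
    (z.arg + w.arg ∈ Set.Ioc (-π) π →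
        z ^ ((m : ℂ) / 2) * w ^ ((m : ℂ) / 2) = (z * w) ^ ((m : ℂ) / 2)) ∧
      (z.arg + w.arg ∉ Set.Ioc (-π) π →
        z ^ ((m : ℂ) / 2) * w ^ ((m : ℂ) / 2) = -((z * w) ^ ((m : ℂ) / 2))) := by
  simpa only [Int.cast_natCast] using
    cpow_half_odd_mul_sign_general z w hz hw m ((Int.odd_coe_nat m).mpr hm)
end

section
/- Let p, q, a, b be real numbers and set X = ((p+b) + i·(a−q))/2 and Y = ((p−b) + i·(a+q))/2, and suppose Y ≠ 0. Then arg X + arg(conj Y) does not lie in (−π, π] if and only if one of the following holds: (1) [ |q| > |a|, or (q = −|a| and q ≠ 0) ] and p < −b·a/q; (2) q > |a| and p = −b·a/q; (3) q = 0 and a = 0 and p < −|b|. -/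
open scoped Real ComplexConjugate

/-!
The sum `arg z + arg w` can exceed `π` only if both numbers lie in the closed upper half-plane, and
drop to `-π` or below only if both lie in the open lower one. Given that,
`Im (z w) = ‖z‖ ‖w‖ sin (arg z + arg w)` lets the sign of `Im (z w)` decide, the sine missing only
the sum `2 π` of two negative reals. For `z = X` and `w = conj Y` the half-plane conditions read
`|a| ≤ -q` and `|a| < q`, and `Im (X conj Y) = -(p q + b a) / 2`.
-/

section ArgSum

variable (z w : ℂ)

theorem im_mul_eq_norm_mul_norm_mul_sin_arg_add_arg :
    (z * w).im = ‖z‖ * ‖w‖ * Real.sin (z.arg + w.arg) := by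
  rw [Complex.mul_im, Real.sin_add]
  linear_combination
    -w.im * Complex.norm_mul_cos_arg z - w.re * Complex.norm_mul_sin_arg z
      - ‖z‖ * Real.sin z.arg * Complex.norm_mul_cos_arg w
      - ‖z‖ * Real.cos z.arg * Complex.norm_mul_sin_arg w

variable {z w}

theorem norm_pos_of_arg_ne_zero (hz : z.arg ≠ 0) : 0 < ‖z‖ :=
  norm_pos_iff.2 fun h ↦ hz (h ▸ Complex.arg_zero)

theorem pi_lt_arg_add_arg_iff :
    π < z.arg + w.arg ↔
      0 ≤ z.im ∧ 0 ≤ w.im ∧ ((z * w).im < 0 ∨ (z.arg = π ∧ w.arg = π)) := by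
  have hz := Complex.arg_le_pi z
  have hw := Complex.arg_le_pi w
  rw [im_mul_eq_norm_mul_norm_mul_sin_arg_add_arg]
  constructor
  · intro hsum
    have hz_pos : 0 < z.arg := by linarith
    have hw_pos : 0 < w.arg := by linarith
    refine ⟨Complex.arg_nonneg_iff.1 hz_pos.le, Complex.arg_nonneg_iff.1 hw_pos.le, ?_⟩
    rcases lt_or_ge (z.arg + w.arg) (2 * π) with hlt | hge
    · left
      have hsin : Real.sin (z.arg + w.arg) < 0 := by
        rw [← Real.sin_sub_two_pi]
        exact Real.sin_neg_of_neg_of_neg_pi_lt (by linarith) (by linarith)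
      have hz_norm := norm_pos_of_arg_ne_zero hz_pos.ne'
      have hw_norm := norm_pos_of_arg_ne_zero hw_pos.ne'
      exact mul_neg_of_pos_of_neg (mul_pos hz_norm hw_norm) hsin
    · exact Or.inr ⟨by linarith, by linarith⟩
  · rintro ⟨hz_im, hw_im, him | ⟨hz_pi, hw_pi⟩⟩
    · by_contra! hsum
      have hsin : 0 ≤ Real.sin (z.arg + w.arg) := Real.sin_nonneg_of_nonneg_of_le_pi
        (add_nonneg (Complex.arg_nonneg_iff.2 hz_im) (Complex.arg_nonneg_iff.2 hw_im)) hsum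
      exact him.not_ge (by positivity)
    · linarith [Real.pi_pos]

theorem arg_add_arg_le_neg_pi_iff :
    z.arg + w.arg ≤ -π ↔ z.im < 0 ∧ w.im < 0 ∧ 0 ≤ (z * w).im := by
  have hz := Complex.neg_pi_lt_arg z
  have hw := Complex.neg_pi_lt_arg w
  rw [im_mul_eq_norm_mul_norm_mul_sin_arg_add_arg, ← Complex.arg_neg_iff, ← Complex.arg_neg_iff]
  constructor
  · intro hsum
    have hsin : 0 ≤ Real.sin (z.arg + w.arg) := by
      rw [← Real.sin_add_two_pi]
      exact Real.sin_nonneg_of_nonneg_of_le_pi (by linarith) (by linarith)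
    exact ⟨by linarith, by linarith, by positivity⟩
  · rintro ⟨hz_neg, hw_neg, him⟩
    by_contra! hsum
    have hsin : Real.sin (z.arg + w.arg) < 0 :=
      Real.sin_neg_of_neg_of_neg_pi_lt (add_neg hz_neg hw_neg) hsum
    have hz_norm := norm_pos_of_arg_ne_zero hz_neg.ne
    have hw_norm := norm_pos_of_arg_ne_zero hw_neg.ne
    exact him.not_gt (mul_neg_of_pos_of_neg (mul_pos hz_norm hw_norm) hsin)

end ArgSum

/-- The complex-linear coefficient `X` of the real-linear map `u ↦ X u + Y (conj u)` of `ℂ` that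
sends `1` to `p + i a` and `i` to `q + i b`. -/
noncomputable def conformalPart (p q a b : ℝ) : ℂ :=
  ((p : ℂ) + b + Complex.I * (a - q)) / 2

/-- The conjugate-linear coefficient `Y` of the real-linear map `u ↦ X u + Y (conj u)` whose
complex-linear coefficient is `conformalPart p q a b`. -/
noncomputable def anticonformalPart (p q a b : ℝ) : ℂ :=
  ((p : ℂ) - b + Complex.I * (a + q)) / 2

section Parts

variable (p q a b : ℝ)

@[simp]
theorem conformalPart_re : (conformalPart p q a b).re = (p + b) / 2 := by
  simp [conformalPart]

@[simp]
theorem conformalPart_im : (conformalPart p q a b).im = (a - q) / 2 := by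
  simp [conformalPart]

@[simp]
theorem anticonformalPart_re : (anticonformalPart p q a b).re = (p - b) / 2 := by
  simp [anticonformalPart]

@[simp]
theorem anticonformalPart_im : (anticonformalPart p q a b).im = (a + q) / 2 := by
  simp [anticonformalPart]

theorem im_conformalPart_mul_conj_anticonformalPart :
    (conformalPart p q a b * conj (anticonformalPart p q a b)).im = -(p * q + b * a) / 2 := by
  simp only [Complex.mul_im, Complex.conj_re, Complex.conj_im, conformalPart_re, conformalPart_im,
    anticonformalPart_re, anticonformalPart_im]
  ring

theorem arg_conformalPart_eq_pi_and_arg_conj_anticonformalPart_eq_pi_iff :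
    (conformalPart p q a b).arg = π ∧ (conj (anticonformalPart p q a b)).arg = π ↔
      q = 0 ∧ a = 0 ∧ p < -|b| := by
  simp only [Complex.arg_eq_pi_iff, Complex.conj_re, Complex.conj_im, conformalPart_re,
    conformalPart_im, anticonformalPart_re, anticonformalPart_im, lt_neg, abs_lt]
  grind

theorem pi_lt_arg_conformalPart_add_arg_conj_anticonformalPart_iff :
    π < (conformalPart p q a b).arg + (conj (anticonformalPart p q a b)).arg ↔
      |a| ≤ -q ∧ (0 < p * q + b * a ∨ (q = 0 ∧ a = 0 ∧ p < -|b|)) := by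
  rw [pi_lt_arg_add_arg_iff, im_conformalPart_mul_conj_anticonformalPart,
    arg_conformalPart_eq_pi_and_arg_conj_anticonformalPart_eq_pi_iff, Complex.conj_im,
    conformalPart_im, anticonformalPart_im, abs_le]
  grind

theorem arg_conformalPart_add_arg_conj_anticonformalPart_le_neg_pi_iff :
    (conformalPart p q a b).arg + (conj (anticonformalPart p q a b)).arg ≤ -π ↔
      |a| < q ∧ p * q + b * a ≤ 0 := by
  rw [arg_add_arg_le_neg_pi_iff, im_conformalPart_mul_conj_anticonformalPart, Complex.conj_im,
    conformalPart_im, anticonformalPart_im, abs_lt]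
  grind

end Parts

theorem sign_conditions_iff_div_conditions (p q a b : ℝ) :
    ((|a| < q ∧ p * q + b * a ≤ 0) ∨
        (|a| ≤ -q ∧ (0 < p * q + b * a ∨ (q = 0 ∧ a = 0 ∧ p < -|b|)))) ↔
      (((|q| > |a| ∨ (q = -|a| ∧ q ≠ 0)) ∧ p < -(b * a / q)) ∨
        (q > |a| ∧ p = -(b * a / q)) ∨
        (q = 0 ∧ a = 0 ∧ p < -|b|)) := by
  have ha := abs_nonneg a
  rcases lt_trichotomy q 0 with hq | rfl | hq
  · have hdiv : p < -(b * a / q) ↔ 0 < p * q + b * a := by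
      rw [← neg_div, lt_div_iff_of_neg hq, neg_lt_iff_pos_add]
    have habs : (|q| > |a| ∨ (q = -|a| ∧ q ≠ 0)) ↔ |a| ≤ -q := by
      rw [abs_of_neg hq]
      grind
    simp only [hdiv, habs, hq.ne, (hq.trans_le ha).not_gt, gt_iff_lt, false_and,
      or_false, false_or]
  · simp only [abs_zero, neg_zero, abs_nonpos_iff, ha.not_gt, ne_eq, not_true_eq_false, and_false,
      false_and, or_false, false_or, mul_zero, zero_add, true_and]
    exact and_congr_right fun ha_zero ↦ by simp [ha_zero]
  · have hdiv : p ≤ -(b * a / q) ↔ p * q + b * a ≤ 0 := by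
      rw [← neg_div, le_div_iff₀ hq, le_neg_iff_add_nonpos_right]
    have habs : ¬ |a| ≤ -q := by linarith
    have hne : q ≠ -|a| := by linarith
    simp only [← hdiv, le_iff_lt_or_eq (a := p), habs, hne, hq.ne', abs_of_pos hq, gt_iff_lt,
      false_and, or_false, and_or_left]

theorem case1_sign_flip_conditions (p q a b : ℝ)
    (hY : (((p : ℂ) - b + Complex.I * (a + q)) / 2) ≠ 0) :
    ((((p : ℂ) + b + Complex.I * (a - q)) / 2).arg +
        (conj ((((p : ℂ) - b + Complex.I * (a + q)) / 2))).arg ∉ Set.Ioc (-π) π) ↔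
      (((|q| > |a| ∨ (q = -|a| ∧ q ≠ 0)) ∧ p < -(b * a / q)) ∨
        (q > |a| ∧ p = -(b * a / q)) ∨
        (q = 0 ∧ a = 0 ∧ p < -|b|)) := by
  change (conformalPart p q a b).arg + (conj (anticonformalPart p q a b)).arg ∉ _ ↔ _
  rw [Set.mem_Ioc, not_and_or, not_lt, not_le,
    arg_conformalPart_add_arg_conj_anticonformalPart_le_neg_pi_iff,
    pi_lt_arg_conformalPart_add_arg_conj_anticonformalPart_iff]
  exact sign_conditions_iff_div_conditions p q a b
end

section
/- Let p, q, a, b be real numbers, set X = ((p+b) + i·(a−q))/2 and Y = ((p−b) + i·(a+q))/2, and suppose Y ≠ 0. Define F₁ : arg X + arg(conj Y) ∉ (−π, π]; F₂ : arg X + arg Y ∉ (−π, π]; F₃ : arg Y + arg(conj Y) ∉ (−π, π]. Define K = q/a if |a| ≥ |q| and a ≠ 0; K = a/q if |q| ≥ |a| and q ≠ 0; and K = −1 if a = q = 0 (these clauses agree on their overlap). Then at least one of F₁, F₂, F₃ holds if and only if either p < −b·K, or [ (a < −|q| or q > |a|) and p = −b·K ]. -/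
open scoped Real ComplexConjugate

/-!
If `w` is not a negative real, then `arg (conj w) = -arg w`, so `arg w + arg (conj w) = 0`, and one
of the sums `arg z ± arg w` leaves `(-π, π]` exactly when `|arg z| + |arg w|` exceeds `π`, or equals
`π` with `arg z < 0`. If `w` is not real, both comparisons with `π` are read off the sign of
`sin (|arg z| + |arg w|)`, that is, of `z.re * |w.im| + |z.im| * w.re`. For `z = X` and `w = Y` this
expression is a positive multiple of `p + b * K`, because
`K * (|a - q| + |a + q|) = |a + q| - |a - q|`. When `Y` is real, `K = -1`, and a flip occurs exactly
when `Y < 0`.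
-/

/-- The sum of the principal arguments of `z` and `w` is not itself a principal argument. For
nonzero `z` and `w` this says that the principal square roots satisfy `√(z * w) = -(√z * √w)`. -/
def SignFlip (z w : ℂ) : Prop :=
  z.arg + w.arg ∉ Set.Ioc (-π) π

/-- At least one of the three flips `F₁`, `F₂`, `F₃`, with `z` and `w` in the roles of `X` and
`Y`. -/
def AnySignFlip (z w : ℂ) : Prop :=
  SignFlip z (conj w) ∨ SignFlip z w ∨ SignFlip w (conj w)

namespace SignFlip

variable {z w : ℂ}

lemma self_conj_iff : SignFlip w (conj w) ↔ w.arg = π := by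
  rw [SignFlip, Complex.arg_conj, Set.mem_Ioc]
  have := Real.pi_pos
  split_ifs with hw
  · exact iff_of_true (fun h ↦ by linarith [h.2]) hw
  · exact iff_of_false (not_not_intro ⟨by linarith, by linarith⟩) hw

lemma not_of_arg_eq_zero (hw : w.arg = 0) : ¬ SignFlip z w := by
  rw [SignFlip, hw, add_zero, not_not]
  exact z.arg_mem_Ioc

lemma conj_or_iff (hw : w.arg ≠ π) :
    SignFlip z (conj w) ∨ SignFlip z w ↔
      π < |z.arg| + |w.arg| ∨ (z.arg < 0 ∧ |z.arg| + |w.arg| = π) := by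
  have hz_gt := z.neg_pi_lt_arg
  have hz_le := z.arg_le_pi
  have hw_gt := w.neg_pi_lt_arg
  have hw_lt := w.arg_le_pi.lt_of_ne hw
  simp only [SignFlip, Complex.arg_conj, if_neg hw, Set.mem_Ioc, not_and_or, not_lt, not_le]
  rcases abs_cases z.arg with ⟨hz_abs, _⟩ | ⟨hz_abs, _⟩ <;>
    rcases abs_cases w.arg with ⟨hw_abs, _⟩ | ⟨hw_abs, _⟩ <;>
    rw [hz_abs, hw_abs] <;> grind

end SignFlip

lemma sign_sin_of_mem_Ioo {x : ℝ} (hx : x ∈ Set.Ioo (-π) π) :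
    SignType.sign (Real.sin x) = SignType.sign x := by
  rcases lt_trichotomy x 0 with h | rfl | h
  · rw [sign_neg h, sign_neg (Real.sin_neg_of_neg_of_neg_pi_lt h hx.1)]
  · rw [Real.sin_zero]
  · rw [sign_pos h, sign_pos (Real.sin_pos_of_pos_of_lt_pi h hx.2)]

lemma norm_mul_cos_abs_arg (z : ℂ) : ‖z‖ * Real.cos |z.arg| = z.re := by
  rw [Real.cos_abs, Complex.norm_mul_cos_arg]

lemma norm_mul_sin_abs_arg (z : ℂ) : ‖z‖ * Real.sin |z.arg| = |z.im| := by
  rw [← Real.abs_sin_eq_sin_abs_of_abs_le_pi z.abs_arg_le_pi, ← Complex.norm_mul_sin_arg z,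
    abs_mul, abs_norm]

lemma norm_mul_norm_mul_sin_abs_arg_add_abs_arg (z w : ℂ) :
    ‖z‖ * ‖w‖ * Real.sin (|z.arg| + |w.arg|) = z.re * |w.im| + |z.im| * w.re := by
  rw [Real.sin_add, ← norm_mul_cos_abs_arg z, ← norm_mul_cos_abs_arg w, ← norm_mul_sin_abs_arg z,
    ← norm_mul_sin_abs_arg w]
  ring

lemma sign_pi_sub_abs_arg_add_abs_arg {z w : ℂ} (hz : z ≠ 0) (hw : w.im ≠ 0) :
    SignType.sign (π - (|z.arg| + |w.arg|)) =
      SignType.sign (z.re * |w.im| + |z.im| * w.re) := by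
  have hw_ne : w ≠ 0 := by rintro rfl; exact hw Complex.zero_im
  have hw_pos : 0 < |w.arg| := abs_pos.2 fun h ↦ hw (Complex.arg_eq_zero_iff.1 h).2
  have hw_lt : |w.arg| < π :=
    abs_lt.2 ⟨w.neg_pi_lt_arg, Complex.arg_lt_pi_iff.2 (.inr hw)⟩
  have hmem : π - (|z.arg| + |w.arg|) ∈ Set.Ioo (-π) π :=
    ⟨by linarith [z.abs_arg_le_pi], by linarith [abs_nonneg z.arg]⟩
  rw [← sign_sin_of_mem_Ioo hmem, Real.sin_pi_sub, ← norm_mul_norm_mul_sin_abs_arg_add_abs_arg,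
    sign_mul, sign_pos (mul_pos (norm_pos_iff.2 hz) (norm_pos_iff.2 hw_ne)), one_mul]

namespace AnySignFlip

variable {z w : ℂ}

lemma iff_re_neg_of_im_eq_zero (hw : w.im = 0) : AnySignFlip z w ↔ w.re < 0 := by
  rcases lt_or_ge w.re 0 with h | h
  · exact iff_of_true (.inr (.inr (SignFlip.self_conj_iff.2 (Complex.arg_eq_pi_iff.2 ⟨h, hw⟩)))) h
  · have harg : w.arg = 0 := Complex.arg_eq_zero_iff.2 ⟨h, hw⟩
    have hconj : conj w = w := Complex.conj_eq_iff_im.2 hw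
    simp only [AnySignFlip, hconj, SignFlip.not_of_arg_eq_zero harg, or_self, h.not_gt]

lemma iff_of_im_ne_zero (hw : w.im ≠ 0) :
    AnySignFlip z w ↔
      z.re * |w.im| + |z.im| * w.re < 0 ∨
        (z.im < 0 ∧ z.re * |w.im| + |z.im| * w.re = 0) := by
  have hw_pi : w.arg ≠ π := fun h ↦ hw (Complex.arg_eq_pi_iff.1 h).2
  rw [AnySignFlip, SignFlip.self_conj_iff, ← or_assoc, or_iff_left hw_pi,
    SignFlip.conj_or_iff hw_pi, Complex.arg_neg_iff]
  rcases eq_or_ne z 0 with rfl | hz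
  · simp [w.abs_arg_le_pi]
  · have hsign := sign_pi_sub_abs_arg_add_abs_arg hz hw
    rw [← sub_neg, ← sign_eq_neg_one_iff, hsign, sign_eq_neg_one_iff, eq_comm (b := π),
      ← sub_eq_zero (a := π), ← sign_eq_zero_iff, hsign, sign_eq_zero_iff]

end AnySignFlip

lemma lt_neg_abs_or_abs_lt_iff {G : Type*} [AddCommGroup G] [LinearOrder G]
    [IsOrderedAddMonoid G] {a q : G} : a < -|q| ∨ |a| < q ↔ a < q ∧ a + q ≠ 0 := by
  rw [lt_neg, abs_lt, abs_lt]
  grind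

section OrderedField

variable {𝕜 : Type*} [Field 𝕜] [LinearOrder 𝕜] [IsStrictOrderedRing 𝕜]

lemma div_mul_abs_sub_add_abs_add {c d : 𝕜} (h : |d| ≤ |c|) :
    d / c * (|c - d| + |c + d|) = |c + d| - |c - d| := by
  rcases eq_or_ne c 0 with rfl | hc
  · obtain rfl : d = 0 := by simpa only [abs_zero, abs_nonpos_iff] using h
    simp
  have hratio : |d / c| ≤ 1 := by
    rw [abs_div]
    exact div_le_one_of_le₀ h (abs_nonneg c)
  obtain ⟨hratio_ge, hratio_le⟩ := abs_le.1 hratio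
  have hsub : |c - d| = (1 - d / c) * |c| := by
    rw [← abs_of_nonneg (sub_nonneg.2 hratio_le), ← abs_mul, one_sub_mul, div_mul_cancel₀ d hc]
  have hadd : |c + d| = (1 + d / c) * |c| := by
    rw [← abs_of_nonneg (neg_le_iff_add_nonneg'.1 hratio_ge), ← abs_mul, one_add_mul,
      div_mul_cancel₀ d hc]
  rw [hsub, hadd]
  ring

lemma mul_abs_sub_add_abs_add_of_eq_div {a q k : 𝕜} (ha : |q| ≤ |a| → a ≠ 0 → k = q / a)
    (hq : |a| ≤ |q| → q ≠ 0 → k = a / q) :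
    k * (|a - q| + |a + q|) = |a + q| - |a - q| := by
  rcases eq_or_ne a 0 with rfl | ha0
  · rcases eq_or_ne q 0 with rfl | hq0
    · simp
    · rw [hq (by simp) hq0]
      simp
  rcases le_total |q| |a| with hqa | haq
  · rw [ha hqa ha0]
    exact div_mul_abs_sub_add_abs_add hqa
  · have hq0 : q ≠ 0 := abs_pos.1 ((abs_pos.2 ha0).trans_le haq)
    rw [hq haq hq0, abs_sub_comm, add_comm a]
    exact div_mul_abs_sub_add_abs_add haq

end OrderedField

lemma anySignFlip_mk_iff {p q a b k : ℝ} (hk : k * (|a - q| + |a + q|) = |a + q| - |a - q|)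
    (hsum : a + q ≠ 0) :
    AnySignFlip ⟨(p + b) / 2, (a - q) / 2⟩ ⟨(p - b) / 2, (a + q) / 2⟩ ↔
      p < -(b * k) ∨ (a < q ∧ p = -(b * k)) := by
  have hpos : 0 < (|a - q| + |a + q|) / 4 := by positivity
  have hfactor : (p + b) / 2 * |(a + q) / 2| + |(a - q) / 2| * ((p - b) / 2) =
      (|a - q| + |a + q|) / 4 * (p + b * k) := by
    rw [abs_div, abs_div, abs_two]
    linear_combination -(b / 4) * hk
  have him : (a - q) / 2 < 0 ↔ a < q := by constructor <;> intro h <;> linarith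
  have hneg : (|a - q| + |a + q|) / 4 * (p + b * k) < 0 ↔ p + b * k < 0 :=
    smul_neg_iff_of_pos_left hpos
  rw [AnySignFlip.iff_of_im_ne_zero (div_ne_zero hsum two_ne_zero)]
  dsimp only
  rw [hfactor, hneg, mul_eq_zero_iff_left hpos.ne', him, ← lt_neg_iff_add_neg,
    ← eq_neg_iff_add_eq_zero]

theorem overall_sign_flip_conditions (p q a b : ℝ)
    (hY : (((p : ℂ) - b + Complex.I * (a + q)) / 2) ≠ 0)
    (F1 F2 F3 : Prop)
    (hF1 : F1 ↔ ((((p : ℂ) + b + Complex.I * (a - q)) / 2).arg +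
        (conj ((((p : ℂ) - b + Complex.I * (a + q)) / 2))).arg ∉ Set.Ioc (-π) π))
    (hF2 : F2 ↔ ((((p : ℂ) + b + Complex.I * (a - q)) / 2).arg +
        ((((p : ℂ) - b + Complex.I * (a + q)) / 2)).arg ∉ Set.Ioc (-π) π))
    (hF3 : F3 ↔ ((((p : ℂ) - b + Complex.I * (a + q)) / 2).arg +
        (conj ((((p : ℂ) - b + Complex.I * (a + q)) / 2))).arg ∉ Set.Ioc (-π) π))
    (K : ℝ)
    (hK1 : |a| ≥ |q| → a ≠ 0 → K = q / a)
    (hK2 : |q| ≥ |a| → q ≠ 0 → K = a / q)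
    (hK3 : a = 0 → q = 0 → K = -1) :
    (F1 ∨ F2 ∨ F3) ↔
      (p < -(b * K) ∨ ((a < -|q| ∨ q > |a|) ∧ p = -(b * K))) := by
  have hX_mk : ((p : ℂ) + b + Complex.I * (a - q)) / 2 = ⟨(p + b) / 2, (a - q) / 2⟩ := by
    rw [Complex.mk_eq_add_mul_I]; push_cast; ring
  have hY_mk : ((p : ℂ) - b + Complex.I * (a + q)) / 2 = ⟨(p - b) / 2, (a + q) / 2⟩ := by
    rw [Complex.mk_eq_add_mul_I]; push_cast; ring
  rw [hF1, hF2, hF3, gt_iff_lt, lt_neg_abs_or_abs_lt_iff]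
  change AnySignFlip _ _ ↔ _
  rw [hX_mk, hY_mk]
  by_cases hsum : a + q = 0
  · have hK : K = -1 := by
      obtain rfl : q = -a := by linarith
      by_cases ha : a = 0
      · exact hK3 ha (by rw [ha, neg_zero])
      · rw [hK1 (abs_neg a).le ha, neg_div, div_self ha]
    rw [AnySignFlip.iff_re_neg_of_im_eq_zero (by simp [hsum])]
    simp [hsum, hK, div_neg_iff]
  · rw [and_iff_left hsum]
    exact anySignFlip_mk_iff (mul_abs_sub_add_abs_add_of_eq_div hK1 hK2) hsum
end

section
/- For every complex number p, ∫₀^{π} exp(p·cos x)·cos(p·sin x) dx = π, and ∫₀^{2π} exp(p·cos x)·cos(p·sin x) dx = 2π. -/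
open scoped Real

/-!
The integrand is the average of `g x` and `g (-x)`, where `g x = exp (p * exp (x * I))`, so its
integral over `[0, nπ]` is half the integral of `g` over `[-nπ, nπ]`, that is, over `n` full
periods. By the mean value property of the entire function `z ↦ exp (p * z)`, each period
contributes `2π`.
-/

section Integrals

open MeasureTheory Metric

variable {E : Type*} [NormedAddCommGroup E]

theorem intervalIntegral_add_comp_neg [NormedSpace ℝ E] {g : ℝ → E} {b : ℝ}
    (hneg : IntervalIntegrable g volume (-b) 0) (hpos : IntervalIntegrable g volume 0 b) :
    ∫ x in 0..b, (g x + g (-x)) = ∫ x in -b..b, g x := by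
  have hneg' : IntervalIntegrable (fun x ↦ g (-x)) volume 0 b := by
    simpa using ((IntervalIntegrable.iff_comp_neg (by simp)).mp hneg).symm
  rw [intervalIntegral.integral_add hpos hneg', intervalIntegral.integral_comp_neg, neg_zero,
    add_comm, intervalIntegral.integral_add_adjacent_intervals hneg hpos]

variable [NormedSpace ℂ E] {f : ℂ → E} {c : ℂ} {R : ℝ}

theorem continuous_comp_circleMap_of_diffContOnCl (hf : DiffContOnCl ℂ f (ball c |R|)) :
    Continuous fun x ↦ f (circleMap c R x) := by
  rcases eq_or_ne R 0 with rfl | hR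
  · simpa using continuous_const
  · have hcont : ContinuousOn f (closedBall c |R|) := closure_ball c (abs_ne_zero.mpr hR) ▸ hf.2
    exact hcont.comp_continuous (continuous_circleMap c R)
      fun x ↦ sphere_subset_closedBall (circleMap_mem_sphere' c R x)

variable [CompleteSpace E]

theorem intervalIntegral_comp_circleMap_of_diffContOnCl (hf : DiffContOnCl ℂ f (ball c |R|)) :
    ∫ x in 0..2 * π, f (circleMap c R x) = (2 * π) • f c := by
  rw [← hf.circleAverage, Real.circleAverage_def, smul_inv_smul₀ Real.two_pi_pos.ne']

theorem intervalIntegral_comp_circleMap_add_comp_neg_of_diffContOnCl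
    (hf : DiffContOnCl ℂ f (ball c |R|)) (n : ℤ) :
    ∫ x in 0..n * π, (f (circleMap c R x) + f (circleMap c R (-x))) = n • (2 * π) • f c := by
  have hint (a b : ℝ) : IntervalIntegrable (fun x ↦ f (circleMap c R x)) volume a b :=
    (continuous_comp_circleMap_of_diffContOnCl hf).intervalIntegrable a b
  have hper : Function.Periodic (fun x ↦ f (circleMap c R x)) (2 * π) :=
    (periodic_circleMap c R).comp f
  have hend : n * π = -(n * π) + n • (2 * π) := by
    rw [zsmul_eq_mul]
    ring
  calc ∫ x in 0..n * π, (f (circleMap c R x) + f (circleMap c R (-x)))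
      = ∫ x in -(n * π)..n * π, f (circleMap c R x) :=
        intervalIntegral_add_comp_neg (hint _ _) (hint _ _)
    _ = ∫ x in -(n * π)..-(n * π) + n • (2 * π), f (circleMap c R x) := by rw [← hend]
    _ = n • ∫ x in -(n * π)..-(n * π) + 2 * π, f (circleMap c R x) :=
        hper.intervalIntegral_add_zsmul_eq n _ hint
    _ = n • ∫ x in 0..2 * π, f (circleMap c R x) := by
        rw [hper.intervalIntegral_add_eq _ 0, zero_add]
    _ = n • (2 * π) • f c := by rw [intervalIntegral_comp_circleMap_of_diffContOnCl hf]

end Integrals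

open Complex in
theorem exp_mul_cos_mul_cos_mul_sin (p z : ℂ) :
    exp (p * cos z) * cos (p * sin z) = (exp (p * exp (z * I)) + exp (p * exp (-z * I))) / 2 := by
  have hpos : p * exp (z * I) = p * cos z + p * sin z * I := by
    rw [exp_mul_I]
    ring
  have hneg : p * exp (-z * I) = p * cos z + -(p * sin z) * I := by
    rw [exp_mul_I, cos_neg, sin_neg]
    ring
  rw [hpos, hneg, exp_add, exp_add, ← mul_add, ← two_cos, mul_left_comm,
    mul_div_cancel_left₀ _ two_ne_zero]

theorem gr_3931_4_generalized_general (p : ℂ) (n : ℤ) :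
    ∫ x : ℝ in 0..n * π,
      Complex.exp (p * Complex.cos x) * Complex.cos (p * Complex.sin x) = n * π := by
  have hf : DiffContOnCl ℂ (fun z ↦ Complex.exp (p * z)) (Metric.ball 0 |1|) :=
    Differentiable.diffContOnCl (by fun_prop)
  have hmean := intervalIntegral_comp_circleMap_add_comp_neg_of_diffContOnCl hf n
  simp only [circleMap_zero, Complex.ofReal_one, one_mul, Complex.ofReal_neg, mul_zero,
    Complex.exp_zero] at hmean
  simp only [exp_mul_cos_mul_cos_mul_sin, intervalIntegral.integral_div, hmean, zsmul_eq_mul,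
    Complex.real_smul, Complex.ofReal_mul, Complex.ofReal_ofNat]
  ring

theorem gr_3931_4_generalized (p : ℂ) :
    (∫ x : ℝ in (0:ℝ)..π,
        Complex.exp (p * Complex.cos x) * Complex.cos (p * Complex.sin x)) = (π : ℂ) ∧
    (∫ x : ℝ in (0:ℝ)..(2 * π),
        Complex.exp (p * Complex.cos x) * Complex.cos (p * Complex.sin x)) = 2 * (π : ℂ) :=
  ⟨by simpa using gr_3931_4_generalized_general p 1,
    by simpa using gr_3931_4_generalized_general p 2⟩
end

section
/- For every complex number p and every natural number m with m ≥ 1, ∫₀^{π} exp(p·cos x)·sin(p·sin x)·sin(m·x) dx = π·p^m/(2·m!). -/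
open scoped Real

/-!
Expanding `exp (p * exp (± x * I))` in powers of `p` shows that `exp (p cos x) sin (p sin x)` is
the sum of the sine series `∑ pⁿ / n! * sin (n x)`, which converges normally in `x`. Integrating
term by term against `sin (m x)`, orthogonality of the sines on `[0, π]` leaves only the `m`-th
coefficient, multiplied by `π / 2`.
-/

theorem integral_cos_int_mul (k : ℤ) :
    ∫ x in (0 : ℝ)..π, Real.cos (k * x) = if k = 0 then π else 0 := by
  split_ifs with hk
  · simp [hk]
  · rw [intervalIntegral.integral_comp_mul_left Real.cos (Int.cast_ne_zero.mpr hk)]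
    simp [Real.sin_int_mul_pi]

theorem integral_sin_nat_mul_mul_sin_nat_mul (n : ℕ) {m : ℕ} (hm : m ≠ 0) :
    ∫ x in (0 : ℝ)..π, Real.sin (n * x) * Real.sin (m * x) = if n = m then π / 2 else 0 := by
  have product_to_sum (x : ℝ) : Real.sin (n * x) * Real.sin (m * x) =
      (Real.cos ((n - m : ℤ) * x) - Real.cos ((n + m : ℤ) * x)) / 2 := by
    push_cast
    rw [sub_mul, add_mul, ← Real.two_mul_sin_mul_sin]
    ring
  have cos_integrable (k : ℤ) :
      IntervalIntegrable (fun x : ℝ ↦ Real.cos (k * x)) MeasureTheory.volume 0 π :=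
    Continuous.intervalIntegrable (by fun_prop) _ _
  have sum_ne_zero : (n + m : ℤ) ≠ 0 := by lia
  simp_rw [product_to_sum]
  rw [intervalIntegral.integral_div,
    intervalIntegral.integral_sub (cos_integrable _) (cos_integrable _),
    integral_cos_int_mul, integral_cos_int_mul, if_neg sum_ne_zero, sub_zero, ite_div, zero_div]
  simp only [sub_eq_zero, Nat.cast_inj]

section SineSeries

variable {E : Type*} [NormedAddCommGroup E] [NormedSpace ℝ E] {a : ℕ → E} {f : ℝ → E}

theorem hasSum_integral_sin_smul_of_hasSum (ha : Summable fun n ↦ ‖a n‖)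
    (hf : ∀ x ∈ Set.Ioc 0 π, HasSum (fun n : ℕ ↦ Real.sin (n * x) • a n) (f x)) (c : ℝ) :
    HasSum (fun n : ℕ ↦ ∫ x in (0 : ℝ)..π, (Real.sin (n * x) * Real.sin (c * x)) • a n)
      (∫ x in (0 : ℝ)..π, Real.sin (c * x) • f x) := by
  have norm_term_le (n : ℕ) (x : ℝ) :
      ‖(Real.sin (n * x) * Real.sin (c * x)) • a n‖ ≤ ‖a n‖ := by
    rw [norm_smul, norm_mul]
    exact mul_le_of_le_one_left (norm_nonneg _)
      (mul_le_one₀ (Real.abs_sin_le_one _) (norm_nonneg _) (Real.abs_sin_le_one _))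
  refine intervalIntegral.hasSum_integral_of_dominated_convergence (fun n _ ↦ ‖a n‖)
    (fun n ↦ Continuous.aestronglyMeasurable (by fun_prop))
    (fun n ↦ .of_forall fun x _ ↦ norm_term_le n x) (.of_forall fun _ _ ↦ ha)
    intervalIntegrable_const (.of_forall fun x hx ↦ ?_)
  rw [Set.uIoc_of_le Real.pi_nonneg] at hx
  simpa only [smul_smul, mul_comm] using (hf x hx).const_smul (Real.sin (c * x))

theorem integral_sin_nat_mul_smul_of_hasSum [CompleteSpace E] (ha : Summable fun n ↦ ‖a n‖)
    (hf : ∀ x ∈ Set.Ioc 0 π, HasSum (fun n : ℕ ↦ Real.sin (n * x) • a n) (f x))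
    {m : ℕ} (hm : m ≠ 0) :
    ∫ x in (0 : ℝ)..π, Real.sin (m * x) • f x = (π / 2) • a m := by
  have termwise := hasSum_integral_sin_smul_of_hasSum ha hf m
  simp only [intervalIntegral.integral_smul_const, integral_sin_nat_mul_mul_sin_nat_mul _ hm,
    ite_smul, zero_smul] at termwise
  rw [← termwise.tsum_eq, tsum_ite_eq]

end SineSeries

theorem exp_mul_cos_mul_sin_mul_sin (p z : ℂ) :
    Complex.exp (p * Complex.cos z) * Complex.sin (p * Complex.sin z) =
      (Complex.exp (p * Complex.exp (-z * Complex.I)) -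
        Complex.exp (p * Complex.exp (z * Complex.I))) * (Complex.I / 2) := by
  have mul_exp_neg_mul_I : p * Complex.exp (-z * Complex.I) =
      p * Complex.cos z + -(p * Complex.sin z) * Complex.I := by
    rw [Complex.exp_mul_I, Complex.cos_neg, Complex.sin_neg]
    ring
  have mul_exp_mul_I : p * Complex.exp (z * Complex.I) =
      p * Complex.cos z + p * Complex.sin z * Complex.I := by
    rw [Complex.exp_mul_I]
    ring
  rw [mul_exp_neg_mul_I, mul_exp_mul_I, Complex.exp_add, Complex.exp_add]
  linear_combination (Complex.exp (p * Complex.cos z) / 2) * Complex.two_sin (p * Complex.sin z)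

theorem hasSum_sin_nat_mul_mul_pow_div_factorial (p z : ℂ) :
    HasSum (fun n : ℕ ↦ Complex.sin (n * z) * (p ^ n / n.factorial))
      (Complex.exp (p * Complex.cos z) * Complex.sin (p * Complex.sin z)) := by
  have exp_series (w : ℂ) : HasSum (fun n : ℕ ↦ w ^ n / n.factorial) (Complex.exp w) := by
    rw [Complex.exp_eq_exp_ℂ]
    exact NormedSpace.expSeries_div_hasSum_exp w
  have term_eq (n : ℕ) : Complex.sin (n * z) * (p ^ n / n.factorial) =
      ((p * Complex.exp (-z * Complex.I)) ^ n / n.factorial -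
        (p * Complex.exp (z * Complex.I)) ^ n / n.factorial) * (Complex.I / 2) := by
    rw [mul_pow, mul_pow, ← Complex.exp_nat_mul, ← Complex.exp_nat_mul, ← mul_assoc, ← mul_assoc,
      mul_neg]
    linear_combination (p ^ n / n.factorial / 2) * Complex.two_sin (n * z)
  simp_rw [exp_mul_cos_mul_sin_mul_sin, term_eq]
  exact ((exp_series _).sub (exp_series _)).mul_right _

theorem gr_3932_1 (p : ℂ) (m : ℕ) (hm : 1 ≤ m) :
    (∫ x : ℝ in (0:ℝ)..π,
        Complex.exp (p * Complex.cos x) * Complex.sin (p * Complex.sin x) *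
          (Real.sin (m * x) : ℂ)) =
      (π : ℂ) * p ^ m / (2 * (m.factorial : ℂ)) := by
  have sine_series (x : ℝ) : HasSum (fun n : ℕ ↦ Real.sin (n * x) • (p ^ n / n.factorial))
      (Complex.exp (p * Complex.cos x) * Complex.sin (p * Complex.sin x)) := by
    simpa using hasSum_sin_nat_mul_mul_pow_div_factorial p x
  have coefficient := integral_sin_nat_mul_smul_of_hasSum
    (NormedSpace.norm_expSeries_div_summable p) (fun x _ ↦ sine_series x) (by lia : m ≠ 0)
  calc _ = (π / 2) • (p ^ m / (m.factorial : ℂ)) := by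
        simpa only [Complex.real_smul, mul_comm] using coefficient
    _ = _ := by
        rw [Complex.real_smul]
        push_cast
        ring
end

section
/- For every complex number p and every natural number m with m ≥ 1, ∫₀^{π} exp(p·cos x)·cos(p·sin x)·cos(m·x) dx = π·p^m/(2·m!). -/
/-!
Since `exp (p * cos x) * cos (p * sin x)` is the mean of `exp (p * exp (I * x))` and
`exp (p * exp (-I * x))`, expanding both exponentials gives its cosine series, with absolutely
summable coefficients `p ^ n / n!`. Orthogonality of the cosines on `[0, π]`, which is that of the
Chebyshev polynomials after the substitution `t = cos x`, then extracts the `m`-th coefficient.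
-/

open scoped Real

section Orthogonality

open Polynomial.Chebyshev

theorem integral_cos_nat_mul_mul_cos_nat_mul_eq_integral_measureT (n m : ℕ) :
    ∫ x in (0 : ℝ)..π, Real.cos (n * x) * Real.cos (m * x) =
      ∫ t, (T ℝ n).eval t * (T ℝ m).eval t ∂measureT := by
  simp only [integral_measureT_eq_integral_cos, T_real_cos, Int.cast_natCast]

theorem integral_cos_nat_mul_mul_cos_nat_mul_of_ne {n m : ℕ} (h : n ≠ m) :
    ∫ x in (0 : ℝ)..π, Real.cos (n * x) * Real.cos (m * x) = 0 := by
  rw [integral_cos_nat_mul_mul_cos_nat_mul_eq_integral_measureT,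
    integral_eval_T_real_mul_eval_T_real_measureT_of_ne h]

theorem integral_cos_nat_mul_mul_self {n : ℕ} (hn : n ≠ 0) :
    ∫ x in (0 : ℝ)..π, Real.cos (n * x) * Real.cos (n * x) = π / 2 := by
  rw [integral_cos_nat_mul_mul_cos_nat_mul_eq_integral_measureT,
    integral_T_real_mul_self_measureT_of_ne_zero hn]

end Orthogonality

section CosineSeries

variable {E : Type*} [NormedAddCommGroup E] [NormedSpace ℝ E] {a : ℕ → E} {f : ℝ → E}

theorem hasSum_integral_cos_nat_mul_smul_of_hasSum (ha : Summable fun n ↦ ‖a n‖)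
    (hf : ∀ x ∈ Set.Icc 0 π, HasSum (fun n : ℕ ↦ Real.cos (n * x) • a n) (f x)) (m : ℕ) :
    HasSum (fun n : ℕ ↦ ∫ x in (0 : ℝ)..π, Real.cos (m * x) • Real.cos (n * x) • a n)
      (∫ x in (0 : ℝ)..π, Real.cos (m * x) • f x) := by
  have norm_term_le (n : ℕ) (x : ℝ) : ‖Real.cos (m * x) • Real.cos (n * x) • a n‖ ≤ ‖a n‖ := by
    rw [smul_smul, norm_smul, norm_mul]
    exact mul_le_of_le_one_left (norm_nonneg _)
      (mul_le_one₀ (Real.abs_cos_le_one _) (norm_nonneg _) (Real.abs_cos_le_one _))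
  refine intervalIntegral.hasSum_integral_of_dominated_convergence (fun n _ ↦ ‖a n‖)
    (fun n ↦ Continuous.aestronglyMeasurable (by fun_prop))
    (fun n ↦ .of_forall fun x _ ↦ norm_term_le n x) (.of_forall fun _ _ ↦ ha)
    intervalIntegrable_const (.of_forall fun x hx ↦ ?_)
  rw [Set.uIoc_of_le Real.pi_nonneg] at hx
  exact (hf x (Set.Ioc_subset_Icc_self hx)).const_smul _

theorem integral_cos_nat_mul_smul_of_hasSum [CompleteSpace E] (ha : Summable fun n ↦ ‖a n‖)
    (hf : ∀ x ∈ Set.Icc 0 π, HasSum (fun n : ℕ ↦ Real.cos (n * x) • a n) (f x))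
    {m : ℕ} (hm : m ≠ 0) :
    ∫ x in (0 : ℝ)..π, Real.cos (m * x) • f x = (π / 2) • a m := by
  have integral_term (n : ℕ) :
      ∫ x in (0 : ℝ)..π, Real.cos (m * x) • Real.cos (n * x) • a n =
        (∫ x in (0 : ℝ)..π, Real.cos (m * x) * Real.cos (n * x)) • a n := by
    simp only [smul_smul, intervalIntegral.integral_smul_const]
  have hasSum_terms := hasSum_integral_cos_nat_mul_smul_of_hasSum ha hf m
  simp only [integral_term] at hasSum_terms
  rw [← integral_cos_nat_mul_mul_self hm]
  refine hasSum_terms.unique (hasSum_single m fun n hn ↦ ?_)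
  rw [integral_cos_nat_mul_mul_cos_nat_mul_of_ne hn.symm, zero_smul]

end CosineSeries

theorem exp_mul_cos_mul_cos_mul_sin_s13 (p x : ℂ) :
    Complex.exp (p * Complex.cos x) * Complex.cos (p * Complex.sin x) =
      (Complex.exp (p * Complex.exp (x * Complex.I)) +
        Complex.exp (p * Complex.exp (-x * Complex.I))) / 2 := by
  rw [eq_div_iff two_ne_zero, mul_assoc, mul_comm (Complex.cos _) 2, Complex.two_cos, mul_add,
    ← Complex.exp_add, ← Complex.exp_add, Complex.exp_mul_I, Complex.exp_mul_I, Complex.cos_neg,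
    Complex.sin_neg]
  ring_nf

theorem hasSum_pow_div_factorial_mul_cos_nat_mul (p x : ℂ) :
    HasSum (fun n : ℕ ↦ p ^ n / n.factorial * Complex.cos (n * x))
      (Complex.exp (p * Complex.cos x) * Complex.cos (p * Complex.sin x)) := by
  have hasSum_exp (z : ℂ) : HasSum (fun n : ℕ ↦ z ^ n / n.factorial) (Complex.exp z) := by
    rw [Complex.exp_eq_exp_ℂ]
    exact NormedSpace.expSeries_div_hasSum_exp z
  rw [exp_mul_cos_mul_cos_mul_sin_s13]
  refine (((hasSum_exp _).add (hasSum_exp _)).div_const 2).congr_fun fun n ↦ ?_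
  rw [Complex.cos, mul_pow, mul_pow, ← Complex.exp_nat_mul, ← Complex.exp_nat_mul]
  ring_nf

theorem gr_3932_2 (p : ℂ) (m : ℕ) (hm : 1 ≤ m) :
    (∫ x : ℝ in (0:ℝ)..π,
        Complex.exp (p * Complex.cos x) * Complex.cos (p * Complex.sin x) *
          (Real.cos (m * x) : ℂ)) =
      (π : ℂ) * p ^ m / (2 * (m.factorial : ℂ)) := by
  have cosine_series (x : ℝ) : HasSum (fun n : ℕ ↦ Real.cos (n * x) • (p ^ n / n.factorial : ℂ))
      (Complex.exp (p * Complex.cos x) * Complex.cos (p * Complex.sin x)) := by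
    simpa [mul_comm] using hasSum_pow_div_factorial_mul_cos_nat_mul p x
  have coefficient := integral_cos_nat_mul_smul_of_hasSum
    (NormedSpace.norm_expSeries_div_summable p) (fun x _ ↦ cosine_series x)
    (Nat.one_le_iff_ne_zero.mp hm)
  simp only [Complex.real_smul, mul_comm (Real.cos _ : ℂ)] at coefficient
  rw [coefficient]
  push_cast
  ring
end

section
/- For every complex number p and every natural number m, ∫₀^{2π} exp(p·cos x)·cos(p·sin x − m·x) dx = 2π·p^m/m!. -/
open scoped Real

/-!
On the unit circle `z = exp (i x)`, the function `exp (p z) z⁻ᵐ` equals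
`exp (p cos x) (cos (p sin x - m x) + i sin (p sin x - m x))`. Its integral is given by Cauchy's
formula for the `m`-th Taylor coefficient of `z ↦ exp (p z)`, while the sine part integrates to zero
because it changes sign under `x ↦ 2π - x`.
-/

section

variable {E : Type*} [NormedAddCommGroup E]

theorem intervalIntegral_eq_zero_of_comp_add_sub_eq_neg [NormedSpace ℝ E] {f : ℝ → E} {a b : ℝ}
    (hf : ∀ x, f (a + b - x) = -f x) : ∫ x in a..b, f x = 0 := by
  have h_reflect : ∫ x in a..b, f (a + b - x) = ∫ x in a..b, f x := by
    rw [intervalIntegral.integral_comp_sub_left, add_sub_cancel_right, add_sub_cancel_left]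
  simp only [hf, intervalIntegral.integral_neg] at h_reflect
  have : IsAddTorsionFree E := .of_isTorsionFree ℝ E
  exact self_eq_neg.mp h_reflect.symm

theorem integral_exp_neg_smul_comp_circleMap [NormedSpace ℂ E] [CompleteSpace E] {f : ℂ → E} {c : ℂ}
    {R : ℝ} (hR : 0 < R) (hf : DiffContOnCl ℂ f (Metric.ball c R)) (n : ℕ) :
    ∫ x in (0 : ℝ)..2 * π, Complex.exp (-(n * x * Complex.I)) • f (circleMap c R x) =
      (2 * π * R ^ n / n.factorial : ℂ) • iteratedDeriv n f c := by
  have hR' : (R : ℂ) ≠ 0 := mod_cast hR.ne'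
  have h_integrand (x : ℝ) : Complex.exp (-(n * x * Complex.I)) • f (circleMap c R x) =
      (R ^ n / Complex.I : ℂ) • (deriv (circleMap c R) x •
        (1 / (circleMap c R x - c) ^ (n + 1)) • f (circleMap c R x)) := by
    rw [deriv_circleMap, circleMap_sub_center, circleMap_zero, smul_smul, smul_smul,
      Complex.exp_neg, mul_assoc (n : ℂ), Complex.exp_nat_mul]
    congr 1
    field_simp
    ring
  simp only [h_integrand, intervalIntegral.integral_smul]
  have h_cauchy := hf.circleIntegral_one_div_sub_center_pow_smul hR n
  rw [circleIntegral] at h_cauchy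
  rw [h_cauchy, smul_smul]
  congr 1
  field_simp

end

theorem exp_neg_mul_exp_mul_circleMap (p m : ℂ) (x : ℝ) :
    Complex.exp (-(m * x * Complex.I)) * Complex.exp (p * circleMap 0 1 x) =
      Complex.exp (p * Complex.cos x) * Complex.cos (p * Complex.sin x - m * x) +
        Complex.exp (p * Complex.cos x) * Complex.sin (p * Complex.sin x - m * x) *
          Complex.I := by
  rw [mul_assoc (Complex.exp (p * _)), ← mul_add, ← Complex.exp_mul_I, ← Complex.exp_add,
    ← Complex.exp_add, circleMap_zero, Complex.exp_mul_I]
  congr 1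
  push_cast
  ring

theorem integral_exp_mul_cos_mul_sin_sub_eq_zero (p : ℂ) (k : ℤ) :
    ∫ x : ℝ in (0 : ℝ)..2 * π,
      Complex.exp (p * Complex.cos x) * Complex.sin (p * Complex.sin x - k * x) = 0 := by
  refine intervalIntegral_eq_zero_of_comp_add_sub_eq_neg fun x ↦ ?_
  have h_cos : Complex.cos ((0 + 2 * π - x : ℝ) : ℂ) = Complex.cos x := by
    simp [Complex.cos_two_pi_sub]
  have h_sin : Complex.sin ((0 + 2 * π - x : ℝ) : ℂ) = -Complex.sin x := by
    simp [Complex.sin_two_pi_sub]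
  have h_arg : p * -Complex.sin x - k * ((0 + 2 * π - x : ℝ) : ℂ) =
      -(p * Complex.sin x - k * x) - k * (2 * π) := by
    push_cast
    ring
  rw [h_cos, h_sin, h_arg, Complex.sin_sub_int_mul_two_pi, Complex.sin_neg, mul_neg]

theorem integral_exp_neg_mul_exp_mul_circleMap (p : ℂ) (m : ℕ) :
    ∫ x in (0 : ℝ)..2 * π,
      Complex.exp (-(m * x * Complex.I)) * Complex.exp (p * circleMap 0 1 x) =
      2 * (π : ℂ) * p ^ m / (m.factorial : ℂ) := by
  have h_entire : Differentiable ℂ fun z ↦ Complex.exp (p * z) := by fun_prop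
  have h_cauchy := integral_exp_neg_smul_comp_circleMap one_pos
    (h_entire.diffContOnCl (s := Metric.ball 0 1)) m
  simpa [div_mul_eq_mul_div] using h_cauchy

theorem gr_3936_1 (p : ℂ) (m : ℕ) :
    (∫ x : ℝ in (0:ℝ)..(2 * π),
        Complex.exp (p * Complex.cos x) * Complex.cos (p * Complex.sin x - m * x)) =
      2 * (π : ℂ) * p ^ m / (m.factorial : ℂ) := by
  have h_sin_part := integral_exp_mul_cos_mul_sin_sub_eq_zero p m
  rw [Int.cast_natCast] at h_sin_part
  rw [← integral_exp_neg_mul_exp_mul_circleMap]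
  simp only [exp_neg_mul_exp_mul_circleMap]
  rw [intervalIntegral.integral_add, intervalIntegral.integral_mul_const, h_sin_part, zero_mul,
    add_zero]
  all_goals exact Continuous.intervalIntegrable (by fun_prop) _ _
end

section
/- For every complex number p and every natural number m, ∫₀^{2π} exp(p·sin x)·sin(p·cos x + m·x) dx = (2π·p^m/m!)·sin(m·π/2). In particular, no positivity restriction on p is needed. -/
open scoped Real

/-! Euler's formula gives `e^{p sin x} e^{∓i (p cos x + m x)} = e^{∓imx} exp(∓ip e^{±ix})`, so
expanding the outer sine splits the integrand into two such terms. The integral of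
`e^{-imx} exp(q e^{ix})` is `2π` times the `m`-th Taylor coefficient `q^m / m!` of `z ↦ exp(q z)`,
by Cauchy's formula on the unit circle, and the reflection `x ↦ 2π - x` reduces the other term to
it. Taking `q = ∓ip` leaves the factor `(-i)^m - i^m = -2i sin(mπ/2)`. -/

section

open Complex

lemma integral_exp_neg_mul_I_smul_circleMap {E : Type*} [NormedAddCommGroup E] [NormedSpace ℂ E]
    [CompleteSpace E] {f : ℂ → E} {c : ℂ} {R : ℝ} (hR : 0 < R)
    (hf : DiffContOnCl ℂ f (Metric.ball c R)) (n : ℕ) :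
    (∫ θ : ℝ in (0:ℝ)..(2 * π), exp (-(n * (θ * I))) • f (circleMap c R θ)) =
      (2 * π * R ^ n / n.factorial : ℂ) • iteratedDeriv n f c := by
  have hR_ne : (R : ℂ) ≠ 0 := ofReal_ne_zero.mpr hR.ne'
  have kernel (θ : ℝ) : exp (-(n * (θ * I))) • f (circleMap c R θ) =
      (R ^ n / I : ℂ) • deriv (circleMap c R) θ •
        (1 / (circleMap c R θ - c) ^ (n + 1)) • f (circleMap c R θ) := by
    simp only [deriv_circleMap, circleMap_sub_center, circleMap_zero, smul_smul, exp_neg,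
      exp_nat_mul]
    congr 1
    field_simp
    ring
  calc
    (∫ θ : ℝ in (0:ℝ)..(2 * π), exp (-(n * (θ * I))) • f (circleMap c R θ))
      = (R ^ n / I : ℂ) • ∮ z in C(c, R), (1 / (z - c) ^ (n + 1)) • f z := by
        simp_rw [kernel, intervalIntegral.integral_smul, circleIntegral]
    _ = (2 * π * R ^ n / n.factorial : ℂ) • iteratedDeriv n f c := by
        rw [hf.circleIntegral_one_div_sub_center_pow_smul hR, smul_smul]
        congr 1
        field_simp

lemma integral_exp_neg_mul_exp_const_mul_exp (q : ℂ) (m : ℕ) :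
    (∫ x : ℝ in (0:ℝ)..(2 * π), exp (-(m * (x * I))) * exp (q * exp (x * I))) =
      2 * π * q ^ m / m.factorial := by
  have hf : Differentiable ℂ fun z => exp (q * z) := by fun_prop
  have taylor := integral_exp_neg_mul_I_smul_circleMap (c := 0) one_pos hf.diffContOnCl m
  simpa [circleMap_zero, iteratedDeriv_cexp_const_mul, div_mul_eq_mul_div] using taylor

lemma integral_exp_mul_exp_const_mul_exp_neg (q : ℂ) (m : ℕ) :
    (∫ x : ℝ in (0:ℝ)..(2 * π), exp (m * (x * I)) * exp (q * exp (-(x * I)))) =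
      2 * π * q ^ m / m.factorial := by
  rw [← integral_exp_neg_mul_exp_const_mul_exp]
  have reflect (x : ℝ) : exp (m * (x * I)) * exp (q * exp (-(x * I))) =
      exp (-(m * ((2 * π - x : ℝ) * I))) * exp (q * exp ((2 * π - x : ℝ) * I)) := by
    have exp_reflect : exp ((2 * π - x : ℝ) * I) = exp (-(x * I)) := by
      rw [ofReal_sub, sub_mul, sub_eq_neg_add]
      simp [exp_add, exp_two_pi_mul_I]
    rw [exp_neg (m * _), exp_nat_mul, exp_nat_mul, exp_reflect, ← inv_pow, ← exp_neg, neg_neg]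
  simp_rw [reflect]
  rw [intervalIntegral.integral_comp_sub_left
    (fun x : ℝ => exp (-(m * (x * I))) * exp (q * exp (x * I))), sub_self, sub_zero]

lemma exp_mul_sin_mul_sin_mul_cos_add (p a z : ℂ) :
    exp (p * sin z) * sin (p * cos z + a * z) =
      I / 2 * (exp (-(a * (z * I))) * exp (-(p * I) * exp (z * I)) -
        exp (a * (z * I)) * exp (p * I * exp (-(z * I)))) := by
  have euler_neg : exp (-(a * (z * I))) * exp (-(p * I) * exp (z * I)) =
      exp (p * sin z) * exp (-(p * cos z + a * z) * I) := by
    rw [exp_mul_I, ← exp_add, ← exp_add]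
    congr 1
    linear_combination -(p * sin z) * I_sq
  have euler_pos : exp (a * (z * I)) * exp (p * I * exp (-(z * I))) =
      exp (p * sin z) * exp ((p * cos z + a * z) * I) := by
    rw [← neg_mul, exp_mul_I, cos_neg, sin_neg, ← exp_add, ← exp_add]
    congr 1
    linear_combination -(p * sin z) * I_sq
  rw [euler_neg, euler_pos]
  linear_combination exp (p * sin z) / 2 * two_sin (p * cos z + a * z)

lemma neg_I_pow_sub_I_pow (m : ℕ) : (-I) ^ m - I ^ m = -(2 * I) * sin (m * π / 2) := by
  have I_pow : I ^ m = exp (m * π / 2 * I) := by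
    rw [mul_div_assoc, mul_assoc, exp_nat_mul, exp_pi_div_two_mul_I]
  have neg_I_pow : (-I) ^ m = exp (-(m * π / 2) * I) := by
    rw [mul_div_assoc, ← mul_neg, ← neg_div, mul_assoc, exp_nat_mul, exp_neg_pi_div_two_mul_I]
  rw [I_pow, neg_I_pow]
  linear_combination I * two_sin (m * π / 2) +
    (exp (-(m * π / 2) * I) - exp (m * π / 2 * I)) * I_sq

end

theorem gr_3936_2_extended (p : ℂ) (m : ℕ) :
    (∫ x : ℝ in (0:ℝ)..(2 * π),
        Complex.exp (p * Complex.sin x) * Complex.sin (p * Complex.cos x + m * x)) =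
      2 * (π : ℂ) * p ^ m / (m.factorial : ℂ) * (Real.sin (m * π / 2) : ℂ) := by
  simp_rw [exp_mul_sin_mul_sin_mul_cos_add]
  rw [intervalIntegral.integral_const_mul, intervalIntegral.integral_sub
      (Continuous.intervalIntegrable (by fun_prop) _ _)
      (Continuous.intervalIntegrable (by fun_prop) _ _),
    integral_exp_neg_mul_exp_const_mul_exp, integral_exp_mul_exp_const_mul_exp_neg,
    ← mul_neg, mul_pow, mul_pow]
  push_cast
  linear_combination Complex.I / 2 * (2 * π * p ^ m / m.factorial) * neg_I_pow_sub_I_pow m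
    - 2 * π * p ^ m / m.factorial * Complex.sin (m * π / 2) * Complex.I_sq
end

section
/- For every complex number p and every natural number m, ∫₀^{2π} exp(p·sin x)·cos(p·cos x + m·x) dx = (2π·p^m/m!)·cos(m·π/2). In particular, no positivity restriction on p is needed. -/
open scoped Real

/-!
Euler's formula writes the integrand as half the sum of `F (-(p * I)) x` and `F (p * I) (-x)`,
where `F a x = exp (-(m * (x * I))) * exp (a * exp (x * I))`. By Cauchy's formula on the unit
circle, the integral of `F a` over a period is `2 * π` times the `m`-th Taylor coefficient
`a ^ m / m!` of `z ↦ exp (a * z)`, and the factor `cos (m * π / 2)` is the mean of `I ^ m` and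
`(-I) ^ m`.
-/

section

open Complex

theorem integral_exp_neg_smul_circleMap {E : Type*} [NormedAddCommGroup E] [NormedSpace ℂ E]
    [CompleteSpace E] {f : ℂ → E} {c : ℂ} {R : ℝ} (hR : 0 < R)
    (hf : DiffContOnCl ℂ f (Metric.ball c R)) (n : ℕ) :
    ∫ θ : ℝ in 0..2 * π, exp (-(n * (θ * I))) • f (circleMap c R θ) =
      (2 * π * R ^ n / n.factorial : ℂ) • iteratedDeriv n f c := by
  have hR₀ : (R : ℂ) ≠ 0 := ofReal_ne_zero.mpr hR.ne'
  have cauchy_integrand (θ : ℝ) :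
      deriv (circleMap c R) θ • (1 / (circleMap c R θ - c) ^ (n + 1)) • f (circleMap c R θ) =
        (I / R ^ n) • exp (-(n * (θ * I))) • f (circleMap c R θ) := by
    have h_exp : exp (θ * I) ≠ 0 := exp_ne_zero _
    simp only [smul_smul, deriv_circleMap, circleMap_sub_center, circleMap_zero, exp_neg,
      exp_nat_mul]
    congr 1
    field_simp
    ring
  have cauchy := hf.circleIntegral_one_div_sub_center_pow_smul hR n
  simp only [circleIntegral, cauchy_integrand, intervalIntegral.integral_smul] at cauchy
  have h_factor : I / (R : ℂ) ^ n ≠ 0 := div_ne_zero I_ne_zero (pow_ne_zero n hR₀)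
  rw [← smul_right_inj h_factor, cauchy, smul_smul]
  congr 1
  field_simp

theorem integral_exp_neg_mul_exp_mul_exp (a : ℂ) (n : ℕ) :
    ∫ x : ℝ in 0..2 * π, exp (-(n * (x * I))) * exp (a * exp (x * I)) =
      2 * π * a ^ n / n.factorial := by
  have h_diff : Differentiable ℂ fun z ↦ exp (a * z) := by fun_prop
  have h_coeff := integral_exp_neg_smul_circleMap (c := 0) one_pos h_diff.diffContOnCl n
  simp only [iteratedDeriv_cexp_const_mul, circleMap_zero, ofReal_one, one_mul, one_pow,
    mul_one, mul_zero, exp_zero, smul_eq_mul] at h_coeff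
  rw [h_coeff, div_mul_eq_mul_div]

theorem intervalIntegral_comp_neg_of_periodic {E : Type*} [NormedAddCommGroup E]
    [NormedSpace ℝ E] {f : ℝ → E} {T : ℝ} (hf : Function.Periodic f T) :
    ∫ x in 0..T, f (-x) = ∫ x in 0..T, f x := by
  simpa only [intervalIntegral.integral_comp_neg, neg_zero, neg_add_cancel, zero_add] using
    hf.intervalIntegral_add_eq (-T) 0

theorem integral_exp_mul_exp_mul_exp_neg (a : ℂ) (n : ℕ) :
    ∫ x : ℝ in 0..2 * π, exp (n * (x * I)) * exp (a * exp (-(x * I))) =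
      2 * π * a ^ n / n.factorial := by
  have h_periodic :
      Function.Periodic (fun x : ℝ ↦ exp (-(n * (x * I))) * exp (a * exp (x * I))) (2 * π) := by
    simpa only [Function.comp_def, circleMap_zero, ofReal_one, one_mul, exp_neg, exp_nat_mul] using
      (periodic_circleMap 0 1).comp fun w ↦ (w ^ n)⁻¹ * exp (a * w)
  simpa only [ofReal_neg, neg_mul, mul_neg, neg_neg, integral_exp_neg_mul_exp_mul_exp] using
    intervalIntegral_comp_neg_of_periodic h_periodic

theorem exp_mul_sin_mul_cos_mul_cos_add (p z w : ℂ) :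
    exp (p * sin z) * cos (p * cos z + w) =
      (exp (w * I) * exp (p * I * exp (-(z * I))) +
        exp (-(w * I)) * exp (-(p * I) * exp (z * I))) / 2 := by
  have h_neg : p * I * exp (-(z * I)) = p * sin z + p * cos z * I := by
    rw [← neg_mul, exp_mul_I, cos_neg, sin_neg]
    linear_combination -p * sin z * I_sq
  have h_pos : -(p * I) * exp (z * I) = p * sin z - p * cos z * I := by
    rw [exp_mul_I]
    linear_combination -p * sin z * I_sq
  rw [h_neg, h_pos, cos.eq_1 (_ + w), mul_div_assoc', mul_add]
  simp only [← exp_add]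
  ring_nf

theorem cos_nat_mul_pi_div_two (n : ℕ) : cos (n * π / 2) = (I ^ n + (-I) ^ n) / 2 := by
  have h_pos : exp (n * π / 2 * I) = I ^ n := by
    rw [mul_div_assoc, mul_assoc, exp_nat_mul, exp_pi_div_two_mul_I]
  have h_neg : exp (-(n * π / 2) * I) = (-I) ^ n := by
    rw [mul_div_assoc, ← mul_neg, ← neg_div, mul_assoc, exp_nat_mul, exp_neg_pi_div_two_mul_I]
  rw [cos, h_pos, h_neg]

end

theorem gr_3936_3_extended (p : ℂ) (m : ℕ) :
    (∫ x : ℝ in (0:ℝ)..(2 * π),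
        Complex.exp (p * Complex.sin x) * Complex.cos (p * Complex.cos x + m * x)) =
      2 * (π : ℂ) * p ^ m / (m.factorial : ℂ) * (Real.cos (m * π / 2) : ℂ) := by
  have h_cos : (Real.cos (m * π / 2) : ℂ) = (Complex.I ^ m + (-Complex.I) ^ m) / 2 := by
    exact_mod_cast cos_nat_mul_pi_div_two m
  simp only [exp_mul_sin_mul_cos_mul_cos_add, mul_assoc (m : ℂ)]
  rw [intervalIntegral.integral_div, intervalIntegral.integral_add
    (Continuous.intervalIntegrable (by fun_prop) _ _)
    (Continuous.intervalIntegrable (by fun_prop) _ _),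
    integral_exp_mul_exp_mul_exp_neg, integral_exp_neg_mul_exp_mul_exp, h_cos, ← mul_neg,
    mul_pow, mul_pow]
  ring
end

section
/- For every complex number p and every natural number m, ∫₀^{2π} exp(p·cos x)·sin(p·sin x + m·x) dx = 0 and ∫₀^{2π} exp(p·cos x)·sin(p·sin x − m·x) dx = 0. -/
open scoped Real

/-!
The reflection `x ↦ 2π - x` fixes `cos x` and, modulo `2π`, negates `q sin x + n x` for every
integer `n`. The integrand is therefore antisymmetric about the midpoint of `[0, 2π]`.
-/

theorem intervalIntegral_eq_zero_of_comp_sub_eq_neg {E : Type*} [NormedAddCommGroup E]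
    [NormedSpace ℝ E] {a b : ℝ} {f : ℝ → E} (hf : ∀ x, f (a + b - x) = -f x) :
    ∫ x in a..b, f x = 0 := by
  have reflect : ∫ x in a..b, f (a + b - x) = ∫ x in a..b, f x := by
    rw [intervalIntegral.integral_comp_sub_left, add_sub_cancel_right, add_sub_cancel_left]
  have : IsAddTorsionFree E := .of_isTorsionFree ℝ E
  refine self_eq_neg.mp ?_
  calc ∫ x in a..b, f x = ∫ x in a..b, f (a + b - x) := reflect.symm
    _ = -∫ x in a..b, f x := by simp only [hf, intervalIntegral.integral_neg]

theorem sin_mul_sin_add_int_mul_two_pi_sub (q z : ℂ) (n : ℤ) :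
    Complex.sin (q * Complex.sin (2 * π - z) + n * (2 * π - z)) =
      -Complex.sin (q * Complex.sin z + n * z) :=
  calc Complex.sin (q * Complex.sin (2 * π - z) + n * (2 * π - z))
      = Complex.sin (-(q * Complex.sin z + n * z) + n * (2 * π)) := by
        rw [Complex.sin_two_pi_sub]
        ring_nf
    _ = -Complex.sin (q * Complex.sin z + n * z) := by
        rw [Complex.sin_add_int_mul_two_pi, Complex.sin_neg]

theorem gr_3936_4_generalized_general (p q : ℂ) (n : ℤ) :
    ∫ x : ℝ in (0:ℝ)..(2 * π),
      Complex.exp (p * Complex.cos x) * Complex.sin (q * Complex.sin x + n * x) = 0 := by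
  refine intervalIntegral_eq_zero_of_comp_sub_eq_neg fun x ↦ ?_
  push_cast
  rw [zero_add, Complex.cos_two_pi_sub, sin_mul_sin_add_int_mul_two_pi_sub, mul_neg]

theorem gr_3936_4_generalized (p : ℂ) (m : ℕ) :
    (∫ x : ℝ in (0:ℝ)..(2 * π),
        Complex.exp (p * Complex.cos x) * Complex.sin (p * Complex.sin x + m * x)) = 0 ∧
    (∫ x : ℝ in (0:ℝ)..(2 * π),
        Complex.exp (p * Complex.cos x) * Complex.sin (p * Complex.sin x - m * x)) = 0 :=
  ⟨by simpa using gr_3936_4_generalized_general p p m,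
    by simpa [sub_eq_add_neg] using gr_3936_4_generalized_general p p (-m)⟩
end

section
/- For all real numbers p, q and every natural number m, ∫₀^{2π} exp(p·cos x + q·sin x)·sin(q·cos x − p·sin x + m·x) dx = (2π/m!)·(√(p² + q²))^m·sin(m·arg(p + i·q)). (This corrects Gradshteyn–Ryzhik Eq. 3.937 3, whose stated answer with atan(q/p) has the wrong sign when m is odd and p < 0.) -/
open scoped Real

/-!
With `a = p + iq` and `z = exp(ix)`, the integrand is the imaginary part of `z ^ m * exp(a / z)`.
Averaging over the unit circle is invariant under `z ↦ z⁻¹`, so Cauchy's formula for the `m`-th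
derivative of `z ↦ exp(a z)` at `0` gives the average `a ^ m / m!`. The polar form of `a` turns its
imaginary part into the right-hand side.
-/

lemma circleAverage_inv_sub_pow_smul {E : Type*} [NormedAddCommGroup E] [NormedSpace ℂ E]
    [CompleteSpace E] {f : ℂ → E} {c : ℂ} {R : ℝ} (hR : 0 < R)
    (hf : DiffContOnCl ℂ f (Metric.ball c R)) (n : ℕ) :
    Real.circleAverage (fun z ↦ ((z - c) ^ n)⁻¹ • f z) c R =
      (n.factorial : ℂ)⁻¹ • iteratedDeriv n f c := by
  have cauchy_kernel (z : ℂ) :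
      (z - c)⁻¹ • ((z - c) ^ n)⁻¹ • f z = (1 / (z - c) ^ (n + 1)) • f z := by
    rw [smul_smul, ← mul_inv, ← pow_succ', one_div]
  rw [Real.circleAverage_eq_circleIntegral hR.ne']
  simp only [cauchy_kernel]
  rw [hf.circleIntegral_one_div_sub_center_pow_smul hR, smul_smul, div_eq_mul_inv,
    inv_mul_cancel_left₀ Complex.two_pi_I_ne_zero]

lemma circleAverage_pow_mul_cexp_mul_inv (a : ℂ) (n : ℕ) :
    Real.circleAverage (fun z ↦ z ^ n * Complex.exp (a * z⁻¹)) 0 1 = a ^ n / n.factorial := by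
  have hexp : DiffContOnCl ℂ (fun z ↦ Complex.exp (a * z)) (Metric.ball 0 1) :=
    Differentiable.diffContOnCl (by fun_prop)
  calc Real.circleAverage (fun z ↦ z ^ n * Complex.exp (a * z⁻¹)) 0 1
      = Real.circleAverage (fun z ↦ ((z - 0) ^ n)⁻¹ • Complex.exp (a * z)) 0 1 := by
        rw [← Real.circleAverage_zero_one_congr_inv]
        simp only [inv_pow, inv_inv, sub_zero, smul_eq_mul]
    _ = (n.factorial : ℂ)⁻¹ • iteratedDeriv n (fun z ↦ Complex.exp (a * z)) 0 :=
        circleAverage_inv_sub_pow_smul one_pos hexp n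
    _ = a ^ n / n.factorial := by
        simp [iteratedDeriv_cexp_const_mul, inv_mul_eq_div]

lemma circleIntegrable_pow_mul_cexp_mul_inv (a : ℂ) (n : ℕ) :
    CircleIntegrable (fun z ↦ z ^ n * Complex.exp (a * z⁻¹)) 0 1 := by
  refine ContinuousOn.circleIntegrable zero_le_one ?_
  have hne : ∀ z ∈ Metric.sphere (0 : ℂ) 1, z ≠ 0 := fun z hz ↦
    Metric.ne_of_mem_sphere hz one_ne_zero
  fun_prop (disch := assumption)

lemma circleAverage_im_pow_mul_cexp_mul_inv (a : ℂ) (n : ℕ) :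
    Real.circleAverage (fun z ↦ (z ^ n * Complex.exp (a * z⁻¹)).im) 0 1 =
      (a ^ n).im / n.factorial := by
  rw [← Complex.div_natCast_im, ← circleAverage_pow_mul_cexp_mul_inv]
  exact Complex.imCLM.circleAverage_comp_comm (circleIntegrable_pow_mul_cexp_mul_inv a n)

lemma im_pow_eq_norm_pow_mul_sin_arg (z : ℂ) (n : ℕ) :
    (z ^ n).im = ‖z‖ ^ n * Real.sin (n * z.arg) := by
  have polar : z ^ n = (‖z‖ ^ n : ℝ) * Complex.exp ((n * z.arg : ℝ) * Complex.I) := by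
    conv_lhs => rw [← Complex.norm_mul_exp_arg_mul_I z, mul_pow, ← Complex.exp_nat_mul]
    push_cast
    ring_nf
  rw [polar, Complex.im_ofReal_mul, Complex.exp_ofReal_mul_I_im]

lemma im_circleMap_pow_mul_cexp (p q : ℝ) (m : ℕ) (x : ℝ) :
    (circleMap 0 1 x ^ m * Complex.exp ((p + Complex.I * q) * (circleMap 0 1 x)⁻¹)).im =
      Real.exp (p * Real.cos x + q * Real.sin x) *
        Real.sin (q * Real.cos x - p * Real.sin x + m * x) := by
  have exponent : (p + Complex.I * q) * (circleMap 0 1 x)⁻¹ =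
      (p * Real.cos x + q * Real.sin x : ℝ) +
        (q * Real.cos x - p * Real.sin x : ℝ) * Complex.I := by
    rw [circleMap_zero_inv, circleMap_zero, Complex.exp_mul_I]
    push_cast
    rw [Complex.cos_neg, Complex.sin_neg]
    linear_combination (-q * Complex.sin x) * Complex.I_sq
  have combined : circleMap 0 1 x ^ m * Complex.exp ((p + Complex.I * q) * (circleMap 0 1 x)⁻¹) =
      (Real.exp (p * Real.cos x + q * Real.sin x) : ℝ) *
        Complex.exp ((q * Real.cos x - p * Real.sin x + m * x : ℝ) * Complex.I) := by
    rw [exponent, circleMap_zero_pow, circleMap_zero, one_pow, Complex.ofReal_one, one_mul,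
      Complex.ofReal_exp, ← Complex.exp_add, ← Complex.exp_add]
    push_cast
    ring_nf
  rw [combined, Complex.im_ofReal_mul, Complex.exp_ofReal_mul_I_im]

theorem gr_3937_3_corrected (p q : ℝ) (m : ℕ) :
    (∫ x : ℝ in (0:ℝ)..(2 * π),
        Real.exp (p * Real.cos x + q * Real.sin x) *
          Real.sin (q * Real.cos x - p * Real.sin x + m * x)) =
      2 * π / (m.factorial : ℝ) * (Real.sqrt (p ^ 2 + q ^ 2)) ^ m *
        Real.sin (m * Complex.arg (p + Complex.I * q)) := by
  have average := circleAverage_im_pow_mul_cexp_mul_inv (p + Complex.I * q) m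
  have norm_eq : ‖(p + Complex.I * q : ℂ)‖ = √(p ^ 2 + q ^ 2) := by
    rw [mul_comm, Complex.norm_add_mul_I]
  simp only [Real.circleAverage_def, im_circleMap_pow_mul_cexp] at average
  rw [im_pow_eq_norm_pow_mul_sin_arg, norm_eq, smul_eq_mul,
    inv_mul_eq_iff_eq_mul₀ Real.two_pi_pos.ne'] at average
  rw [average]
  ring
end

section
/- For all real numbers p, q and every natural number m, ∫₀^{2π} exp(p·cos x + q·sin x)·cos(q·cos x − p·sin x + m·x) dx = (2π/m!)·(√(p² + q²))^m·cos(m·arg(p + i·q)). (This corrects Gradshteyn–Ryzhik Eq. 3.937 4, whose stated answer with atan(q/p) has the wrong sign when m is odd and p < 0.) -/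
open scoped Real

/-!
The integrand is the real part of `exp (w̄ e^{ix}) e^{-imx}`, where `w = p + iq`. Up to the factor
`2π`, the integral of this function over a period is the `m`-th Taylor coefficient `w̄ᵐ / m!` at `0`
of the entire function `z ↦ exp (w̄ z)`, by Cauchy's integral formula on the unit circle. Passing to
real parts replaces `w̄ᵐ` by `Re wᵐ = |w|ᵐ cos (m arg w)`.
-/

section

open Complex

theorem integral_exp_neg_smul_circleMap_eq_iteratedDeriv {E : Type*} [NormedAddCommGroup E]
    [NormedSpace ℂ E] [CompleteSpace E] {f : ℂ → E} {c : ℂ} {R : ℝ} (hR : 0 < R) (n : ℕ)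
    (hf : DiffContOnCl ℂ f (Metric.ball c R)) :
    ∫ θ in (0 : ℝ)..2 * π, exp (-(n * θ * I)) • f (circleMap c R θ) =
      (2 * π * R ^ n / n.factorial : ℂ) • iteratedDeriv n f c := by
  have hR₀ : (R : ℂ) ≠ 0 := ofReal_ne_zero.mpr hR.ne'
  have kernel_eq (θ : ℝ) : exp (-(n * θ * I)) =
      R ^ n / I * (deriv (circleMap c R) θ * (1 / (circleMap c R θ - c) ^ (n + 1))) := by
    have hexp : exp (n * θ * I) = exp (θ * I) ^ n := by
      rw [← exp_nat_mul, mul_assoc]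
    rw [deriv_circleMap, circleMap_sub_center, circleMap_zero, exp_neg, hexp]
    field_simp
    ring
  calc ∫ θ in (0 : ℝ)..2 * π, exp (-(n * θ * I)) • f (circleMap c R θ)
    _ = (R ^ n / I) • ∮ z in C(c, R), (1 / (z - c) ^ (n + 1)) • f z := by
      simp only [circleIntegral, kernel_eq, mul_smul, intervalIntegral.integral_smul]
    _ = (2 * π * R ^ n / n.factorial : ℂ) • iteratedDeriv n f c := by
      rw [hf.circleIntegral_one_div_sub_center_pow_smul hR n, smul_smul]
      congr 1
      field_simp

theorem integral_exp_mul_exp_mul_I_sub (w : ℂ) (n : ℕ) :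
    ∫ θ in (0 : ℝ)..2 * π, exp (w * exp (θ * I) - n * θ * I) =
      2 * π / n.factorial * w ^ n := by
  have hf : Differentiable ℂ fun z ↦ exp (w * z) := by fun_prop
  have h := integral_exp_neg_smul_circleMap_eq_iteratedDeriv (c := 0) one_pos n hf.diffContOnCl
  simpa [circleMap_zero, ← exp_add, sub_eq_neg_add] using h

theorem re_exp_mul_exp_mul_I_sub (w : ℂ) (θ t : ℝ) :
    (exp (w * exp (θ * I) - t * I)).re =
      Real.exp (w.re * Real.cos θ - w.im * Real.sin θ) *
        Real.cos (w.re * Real.sin θ + w.im * Real.cos θ - t) := by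
  simp [exp_re, exp_ofReal_mul_I_im]

theorem integral_exp_mul_cos_eq_re_pow (w : ℂ) (n : ℕ) :
    ∫ θ in (0 : ℝ)..2 * π, Real.exp (w.re * Real.cos θ - w.im * Real.sin θ) *
        Real.cos (w.re * Real.sin θ + w.im * Real.cos θ - n * θ) =
      2 * π / n.factorial * (w ^ n).re := by
  have integrable : IntervalIntegrable (fun θ : ℝ ↦ exp (w * exp (θ * I) - n * θ * I))
      MeasureTheory.volume 0 (2 * π) :=
    Continuous.intervalIntegrable (by fun_prop) _ _
  calc
    _ = ∫ θ in (0 : ℝ)..2 * π, (exp (w * exp (θ * I) - n * θ * I)).re := by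
      simp only [← re_exp_mul_exp_mul_I_sub, ofReal_mul, ofReal_natCast]
    _ = (2 * π / n.factorial * w ^ n : ℂ).re := by
      rw [← integral_exp_mul_exp_mul_I_sub w n]
      exact reCLM.intervalIntegral_comp_comm integrable
    _ = 2 * π / n.factorial * (w ^ n).re := by
      rw [← re_ofReal_mul]
      norm_cast

theorem re_pow_eq_norm_pow_mul_cos_arg (w : ℂ) (n : ℕ) :
    (w ^ n).re = ‖w‖ ^ n * Real.cos (n * w.arg) := by
  have polar : w ^ n = (‖w‖ ^ n : ℝ) * exp ((n * w.arg : ℝ) * I) := by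
    conv_lhs => rw [← norm_mul_exp_arg_mul_I w, mul_pow, ← exp_nat_mul]
    push_cast
    rw [mul_assoc (n : ℂ)]
  rw [polar, re_ofReal_mul, exp_ofReal_mul_I_re]

end

theorem gr_3937_4_corrected (p q : ℝ) (m : ℕ) :
    (∫ x : ℝ in (0:ℝ)..(2 * π),
        Real.exp (p * Real.cos x + q * Real.sin x) *
          Real.cos (q * Real.cos x - p * Real.sin x + m * x)) =
      2 * π / (m.factorial : ℝ) * (Real.sqrt (p ^ 2 + q ^ 2)) ^ m *
        Real.cos (m * Complex.arg (p + Complex.I * q)) := by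
  set w : ℂ := p + Complex.I * q with hw
  have hre : (star w).re = p := by simp [hw]
  have him : (star w).im = -q := by simp [hw]
  have hnorm : ‖w‖ = Real.sqrt (p ^ 2 + q ^ 2) := by
    rw [hw, mul_comm, Complex.norm_add_mul_I]
  have hpow : (star w ^ m).re = (w ^ m).re := by
    rw [← star_pow]
    exact Complex.conj_re _
  have hcos (x : ℝ) : Real.cos (q * Real.cos x - p * Real.sin x + m * x) =
      Real.cos (p * Real.sin x + -q * Real.cos x - m * x) := by
    rw [← Real.cos_neg]
    ring_nf
  have h := integral_exp_mul_cos_eq_re_pow (star w) m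
  rw [hre, him, hpow, re_pow_eq_norm_pow_mul_cos_arg, hnorm, ← mul_assoc] at h
  simpa only [hcos, neg_mul, sub_neg_eq_add] using h
end
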